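/- arXiv:1710.10322 — 5 statements merged into one kernel-verified Lean document; each statement's English description precedes it below -/
import Mathlib

section
/- Let r ∣ n and a < r be positive integers, let g = n/r, and assume n − ga − 3 > 0. Let q_0 ≥ 2r+3 be a prime power such that the multiplicative group 𝔽_{q_0}^* contains a subgroup G with |G| ≥ r+2 and at least n/r cosets (i.e., (q_0−1)/|G| ≥ n/r). Then there exists a maximally recoverable (n, r, h=3, a, q)-local reconstruction code over the field with q = q_0^3 elements. -/
/-- The parity check matrix of an `(n, r, h, a, q)`-local reconstruction code with `g = n/r`
local groups, given by local-parity matrices `A i` (in block-diagonal position) and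
heavy-parity matrices `B i`. Rows are indexed by `(Fin g × Fin a) ⊕ Fin h`
(local parity rows first, then the `h` heavy rows) and columns by `Fin g × Fin r`
(the `i`-th local group consists of the columns with first coordinate `i`). -/
def lrcParityCheck (F : Type) [Field F] (g r a h : ℕ)
    (A : Fin g → Matrix (Fin a) (Fin r) F)
    (B : Fin g → Matrix (Fin h) (Fin r) F) :
    Matrix ((Fin g × Fin a) ⊕ Fin h) (Fin g × Fin r) F :=
  fun ρ c =>
    Sum.elim (fun p : Fin g × Fin a => if p.1 = c.1 then A p.1 p.2 c.2 else 0)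
      (fun j : Fin h => B c.1 j c.2) ρ

/-- `A, B` define a maximally recoverable LRC:  every `a × a` minor of each `A i` is
nonzero (stated: any `a` columns of `A i` are linearly independent), and for every set `E`
of `a * g + h` columns containing at least `a` columns from each local group, the
corresponding columns of the parity check matrix are linearly independent (equivalently,
the square submatrix of the parity check matrix on the columns of `E` is invertible). -/
def IsMRLRC (F : Type) [Field F] (g r a h : ℕ)
    (A : Fin g → Matrix (Fin a) (Fin r) F)
    (B : Fin g → Matrix (Fin h) (Fin r) F) : Prop :=
  (∀ i : Fin g, ∀ S : Finset (Fin r), S.card = a →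
      LinearIndependent F (fun c : {x // x ∈ S} => fun j : Fin a => A i j c.1)) ∧
  (∀ E : Finset (Fin g × Fin r), E.card = a * g + h →
      (∀ i : Fin g, a ≤ (E.filter (fun x => x.1 = i)).card) →
      LinearIndependent F
        (fun c : {x // x ∈ E} => fun ρ => lrcParityCheck F g r a h A B ρ c.1))

/-- There is a maximally recoverable `(n = g * r, r, h, a, q)`-local reconstruction code
with `g` local groups each of size `r`, over the field with `q` elements. -/
def ExistsMRLRC (g r h a q : ℕ) : Prop :=
  ∃ (F : Type) (_ : Field F) (_ : Fintype F),
    Fintype.card F = q ∧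
      ∃ (A : Fin g → Matrix (Fin a) (Fin r) F) (B : Fin g → Matrix (Fin h) (Fin r) F),
        IsMRLRC F g r a h A B

/-!
Linear independence of the columns indexed by a set `E` of the right size is shown through the
rows. A combination of the rows acts on the `i`-th group as the rational function
`P i + l i * y₂ / X + m i * y₃ / (X - β)` evaluated at the points `α j` of `G`, where `P i` has
degree at most `a` and its coefficient `y₁` at `X ^ a` is the same for all groups; here
`y₁, y₂, y₃` are the coefficients of the heavy rows. If this function vanishes at `a + e` points of
the group with `e > 0`, comparing its numerator with the nodal polynomial of these points gives `e`
relations over the base field among `y₁`, `y₂` and `m i * y₃`. The excesses `e` add up to three.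
Were `y₃` nonzero, dividing by it would put `t` of the `m i` into a space of dimension `t - 1`, but
the `m i` lie on the moment curve and any three of them are independent. Once `y₃ = 0`, either some
group gives `y₁ = y₂ = 0` at once, or three groups give `y₁ = t i * y₂` with `t i` in the coset of
`(-1) ^ (a + 1) * l i`, and distinctness of the cosets forces `y₁ = y₂ = 0`. The remaining
coefficients vanish because a nonzero polynomial of degree less than `a` has fewer than `a` roots.
-/

open Polynomial Lagrange Finset

theorem exists_pos_and_sum_erase_eq {ι : Type*} [DecidableEq ι] {s : Finset ι} {e : ι → ℕ}
    (h : ∑ i ∈ s, e i ≠ 0) :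
    ∃ i ∈ s, 0 < e i ∧ e i + ∑ j ∈ s.erase i, e j = ∑ j ∈ s, e j := by
  obtain ⟨i, hi, hne⟩ := exists_ne_zero_of_sum_ne_zero h
  exact ⟨i, hi, Nat.pos_of_ne_zero hne, add_sum_erase s e hi⟩

theorem sum_eq_three_cases {ι : Type*} {s : Finset ι} {e : ι → ℕ} (h : ∑ i ∈ s, e i = 3) :
    (∃ i ∈ s, e i = 3) ∨ (∃ i ∈ s, ∃ j ∈ s, i ≠ j ∧ e i = 2 ∧ e j = 1) ∨
      ∃ T ⊆ s, #T = 3 ∧ ∀ i ∈ T, e i = 1 := by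
  classical
  obtain ⟨i, hi, hi₀, hi'⟩ := exists_pos_and_sum_erase_eq (by omega : ∑ i ∈ s, e i ≠ 0)
  obtain hi₃ | hi₃ := eq_or_ne (e i) 3
  · exact .inl ⟨i, hi, hi₃⟩
  obtain ⟨j, hj, hj₀, hj'⟩ := exists_pos_and_sum_erase_eq (by omega : ∑ j ∈ s.erase i, e j ≠ 0)
  have hji : j ≠ i := ne_of_mem_erase hj
  have hjs : j ∈ s := mem_of_mem_erase hj
  obtain hi₂ | hi₂ := eq_or_ne (e i) 2
  · exact .inr (.inl ⟨i, hi, j, hjs, hji.symm, hi₂, by omega⟩)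
  obtain hj₂ | hj₂ := eq_or_ne (e j) 2
  · exact .inr (.inl ⟨j, hjs, i, hi, hji, hj₂, by omega⟩)
  obtain ⟨k, hk, hk₀, hk'⟩ :=
    exists_pos_and_sum_erase_eq (by omega : ∑ k ∈ (s.erase i).erase j, e k ≠ 0)
  have hkj : k ≠ j := ne_of_mem_erase hk
  obtain ⟨hki, hks⟩ := mem_erase.1 (mem_of_mem_erase hk)
  refine .inr (.inr ⟨{i, j, k}, by simp [insert_subset_iff, *],
    card_eq_three.2 ⟨i, j, k, hji.symm, hki.symm, hkj.symm, rfl⟩, ?_⟩)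
  simp only [mem_insert, mem_singleton, forall_eq_or_imp, forall_eq]
  omega

theorem linearIndependent_col_of_row {F ρ κ : Type*} [Field F] [Fintype ρ] [Fintype κ]
    {M : Matrix ρ κ F} (hcard : Fintype.card ρ = Fintype.card κ)
    (hM : LinearIndependent F M.row) : LinearIndependent F M.col := by
  rw [linearIndependent_iff_card_eq_finrank_span, Set.finrank, ← M.rank_eq_finrank_span_cols,
    hM.rank_matrix, hcard]

theorem eq_zero_of_forall_mul_mem_span {K L ι : Type*} [CommRing K] [Nontrivial K] [CommRing L]
    [IsDomain L] [Algebra K L] {m : ι → L} {T : Finset ι} (hm : LinearIndepOn K m T) {y : L}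
    {W : Finset L} (hW : #W < #T)
    (h : ∀ i ∈ T, m i * y ∈ Submodule.span K (W : Set L)) : y = 0 := by
  by_contra hy
  have hmy : LinearIndependent K fun i : T => m i * y :=
    hm.map' (LinearMap.mulRight K y) (LinearMap.ker_eq_bot.2 (mul_left_injective₀ hy))
  have hle := linearIndependent_le_span_aux' _ hmy (W : Set L)
    (Set.range_subset_iff.2 fun i => h i i.2)
  simp only [Fintype.card_coe, coe_sort_coe] at hle
  omega

theorem linearIndependent_sum_pow_smul {K V ι : Type*} [CommRing K] [IsDomain K]
    [AddCommGroup V] [Module K V] {n : ℕ} {v : Fin n → V} (hv : LinearIndependent K v)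
    {x : ι → K} {T : Finset ι} (hx : Set.InjOn x T) (hT : #T ≤ n) :
    LinearIndepOn K (fun i => ∑ k : Fin n, x i ^ (k : ℕ) • v k) T := by
  rw [LinearIndepOn, ← linearIndependent_equiv T.equivFin.symm, Fintype.linearIndependent_iff]
  intro c hc
  have hsum : ∑ k : Fin n, (∑ t, c t * x (T.equivFin.symm t) ^ (k : ℕ)) • v k = 0 := by
    simp_rw [sum_smul, mul_smul]
    rw [sum_comm]
    simpa only [Function.comp_apply, smul_sum] using hc
  have hpow := Fintype.linearIndependent_iff.1 hv _ hsum
  refine congrFun (Matrix.eq_zero_of_forall_pow_sum_mul_pow_eq_zero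
    (hx.injective.comp T.equivFin.symm.injective) fun k => ?_)
  exact hpow ⟨k, k.2.trans_le hT⟩

section Nodal

variable {F ι : Type*} [Field F] {v : ι → F} {s : Finset ι} {f : F[X]}

theorem exists_eq_nodal_mul (hv : Set.InjOn v s) {k : ℕ} (hf : f.natDegree ≤ #s + k)
    (hroot : ∀ i ∈ s, f.eval (v i) = 0) :
    ∃ q : F[X], f = nodal s v * q ∧ q.natDegree ≤ k ∧ q.coeff k = f.coeff (#s + k) := by
  obtain ⟨q, rfl⟩ : nodal s v ∣ f := by
    refine prod_dvd_of_coprime (fun i hi j hj hij => ?_) fun i hi => dvd_iff_isRoot.2 (hroot i hi)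
    exact isCoprime_X_sub_C_of_isUnit_sub (sub_ne_zero.2 (hv.ne hi hj hij)).isUnit
  have hmonic : (nodal s v).Monic := nodal_monic
  have hq : q.natDegree ≤ k := by
    obtain rfl | hq₀ := eq_or_ne q 0
    · simp
    · rw [hmonic.natDegree_mul' hq₀, natDegree_nodal] at hf
      omega
  refine ⟨q, rfl, hq, ?_⟩
  rw [coeff_mul_add_eq_of_natDegree_le natDegree_nodal.le hq, ← natDegree_nodal (s := s) (v := v),
    hmonic.coeff_natDegree, one_mul]

theorem eval_eq_coeff_mul_eval_nodal (hv : Set.InjOn v s) (hf : f.natDegree ≤ #s)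
    (hroot : ∀ i ∈ s, f.eval (v i) = 0) (x : F) :
    f.eval x = f.coeff #s * (nodal s v).eval x := by
  obtain ⟨q, hfq, hq, hcoeff⟩ := exists_eq_nodal_mul (k := 0) hv hf hroot
  rw [eq_C_of_natDegree_le_zero hq, hcoeff] at hfq
  conv_lhs => rw [hfq, eval_mul, eval_C, mul_comm, add_zero]

-- The quotient by the nodal polynomial is linear; the difference eliminates its constant term.
theorem eval_div_nodal_sub_eval_div_nodal (hv : Set.InjOn v s) (hf : f.natDegree ≤ #s + 1)
    (hroot : ∀ i ∈ s, f.eval (v i) = 0) {x y : F} (hx : (nodal s v).eval x ≠ 0)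
    (hy : (nodal s v).eval y ≠ 0) :
    f.eval x / (nodal s v).eval x - f.eval y / (nodal s v).eval y =
      (x - y) * f.coeff (#s + 1) := by
  obtain ⟨q, hfq, hq, hcoeff⟩ := exists_eq_nodal_mul hv hf hroot
  obtain ⟨u, z, rfl⟩ := exists_eq_X_add_C_of_natDegree_le_one hq
  rw [← hcoeff, hfq, eval_mul, eval_mul, mul_div_cancel_left₀ _ hx, mul_div_cancel_left₀ _ hy]
  simp only [eval_add, eval_mul, eval_C, eval_X, coeff_add, coeff_C_mul, coeff_X_one, coeff_C_succ]
  ring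

theorem eq_zero_of_coeff_eq_zero_of_eval_eq_zero (hv : Set.InjOn v s) {a : ℕ} (hs : a ≤ #s)
    (hf : f.natDegree ≤ a) (hcoeff : f.coeff a = 0) (hroot : ∀ i ∈ s, f.eval (v i) = 0) :
    f = 0 := by
  refine eq_zero_of_degree_lt_of_eval_index_eq_zero _ hv ?_ hroot
  refine lt_of_lt_of_le ?_ (by exact_mod_cast hs : (a : WithBot ℕ) ≤ #s)
  refine (degree_lt_iff_coeff_zero _ _).2 fun k hk => ?_
  obtain rfl | hk := hk.eq_or_lt
  · exact hcoeff
  · exact coeff_eq_zero_of_natDegree_lt (hf.trans_lt hk)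

end Nodal

theorem eval_nodal_algebraMap {R A ι : Type*} [CommRing R] [CommRing A] [Algebra R A]
    (s : Finset ι) (v : ι → R) (x : R) :
    (nodal s fun i => algebraMap R A (v i)).eval (algebraMap R A x) =
      algebraMap R A ((nodal s v).eval x) := by
  simp [eval_nodal]

section ClearPoles

variable {R : Type*} [CommRing R]

/-- The numerator of the rational function `P + c / X + d / (X - b)` over the denominator
`X * (X - b)`. -/
noncomputable def clearPoles (P : R[X]) (b c d : R) : R[X] :=
  X * (X - C b) * P + C c * (X - C b) + C d * X

variable {P : R[X]} {a : ℕ} {b : R} (c d : R)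

theorem eval_zero_clearPoles (P : R[X]) (b : R) : (clearPoles P b c d).eval 0 = -(b * c) := by
  simp only [clearPoles, eval_add, eval_mul, eval_sub, eval_X, eval_C]
  ring

theorem eval_pole_clearPoles (P : R[X]) (b : R) : (clearPoles P b c d).eval b = b * d := by
  simp only [clearPoles, eval_add, eval_mul, eval_sub, eval_X, eval_C]
  ring

theorem natDegree_clearPoles_le (hP : P.natDegree ≤ a) :
    (clearPoles P b c d).natDegree ≤ a + 2 := by
  have hXX : (X * (X - C b) * P).natDegree ≤ a + 2 := by
    rw [add_comm a]
    exact natDegree_mul_le_of_le (by compute_degree) hP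
  refine natDegree_add_le_of_degree_le (natDegree_add_le_of_degree_le hXX ?_) ?_ <;>
    exact le_trans (by compute_degree) (by omega : 1 ≤ a + 2)

theorem coeff_clearPoles (hP : P.natDegree ≤ a) :
    (clearPoles P b c d).coeff (a + 2) = P.coeff a := by
  have hP' : P.coeff (a + 1) = 0 := coeff_eq_zero_of_natDegree_lt (by omega)
  simp [clearPoles, mul_assoc, sub_mul, coeff_X, hP']

end ClearPoles

theorem eval_clearPoles {F : Type*} [Field F] {x b : F} (P : F[X]) (c d : F) (hx : x ≠ 0)
    (hxb : x ≠ b) : (clearPoles P b c d).eval x =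
      x * (x - b) * (P.eval x + c / x + d / (x - b)) := by
  have : x - b ≠ 0 := sub_ne_zero.2 hxb
  simp only [clearPoles, eval_add, eval_mul, eval_sub, eval_X, eval_C]
  field_simp

section Group

variable {K F ι : Type*} [Field K] [Field F] [Algebra K F] {α : ι → K} {s : Finset ι} {β : K}
  {P : F[X]} {a : ℕ} {c d : F}

theorem eq_zero_of_eval_clearPoles_eq_zero (hα : Set.InjOn α s) (hβ : β ≠ 0)
    (hP : P.natDegree ≤ a)
    (hroot : ∀ j ∈ s, (clearPoles P (algebraMap K F β) c d).eval (algebraMap K F (α j)) = 0)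
    (hs : #s = a + 3) : P.coeff a = 0 ∧ c = 0 ∧ d = 0 := by
  have hzero : clearPoles P (algebraMap K F β) c d = 0 := by
    refine eq_zero_of_degree_lt_of_eval_index_eq_zero _
      ((algebraMap K F).injective.comp_injOn hα) ?_ hroot
    refine (degree_le_of_natDegree_le (natDegree_clearPoles_le c d hP)).trans_lt ?_
    exact_mod_cast (by omega : a + 2 < #s)
  refine ⟨?_, ?_, ?_⟩
  · rw [← coeff_clearPoles c d hP, hzero, coeff_zero]
  · simpa [hzero, hβ] using eval_zero_clearPoles c d P (algebraMap K F β)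
  · simpa [hzero, hβ] using eval_pole_clearPoles c d P (algebraMap K F β)

theorem eq_smul_of_eval_clearPoles_eq_zero (hα : Set.InjOn α s) (hβ : β ≠ 0)
    (hP : P.natDegree ≤ a)
    (hroot : ∀ j ∈ s, (clearPoles P (algebraMap K F β) c d).eval (algebraMap K F (α j)) = 0)
    (hs : #s = a + 2) :
    c = (-(nodal s α).eval 0 / β) • P.coeff a ∧ d = ((nodal s α).eval β / β) • P.coeff a := by
  have hβ' : algebraMap K F β ≠ 0 := by simpa
  have heval := eval_eq_coeff_mul_eval_nodal ((algebraMap K F).injective.comp_injOn hα)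
    ((natDegree_clearPoles_le c d hP).trans hs.ge) hroot
  rw [hs, coeff_clearPoles c d hP] at heval
  have h₀ := heval (algebraMap K F 0)
  have h₁ := heval (algebraMap K F β)
  simp only [Function.comp_def, eval_nodal_algebraMap] at h₀ h₁
  rw [map_zero, eval_zero_clearPoles] at h₀
  rw [eval_pole_clearPoles] at h₁
  simp only [Algebra.smul_def, map_div₀, map_neg]
  constructor
  · field_simp
    linear_combination -h₀
  · field_simp
    linear_combination h₁

theorem residue_eq_smul_of_eval_clearPoles_eq_zero (hα : Set.InjOn α s) (hα₀ : ∀ j ∈ s, α j ≠ 0)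
    (hβ : β ≠ 0) (hαβ : ∀ j ∈ s, α j ≠ β) (hP : P.natDegree ≤ a)
    (hroot : ∀ j ∈ s, (clearPoles P (algebraMap K F β) c d).eval (algebraMap K F (α j)) = 0)
    (hs : #s = a + 1) :
    d = (nodal s α).eval β • (P.coeff a - ((nodal s α).eval 0)⁻¹ • c) := by
  have hβ' : algebraMap K F β ≠ 0 := by simpa
  have hN₀ : algebraMap K F ((nodal s α).eval 0) ≠ 0 :=
    (_root_.map_ne_zero _).2 (eval_nodal_not_at_node fun j hj => (hα₀ j hj).symm)
  have hNβ : algebraMap K F ((nodal s α).eval β) ≠ 0 :=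
    (_root_.map_ne_zero _).2 (eval_nodal_not_at_node fun j hj => (hαβ j hj).symm)
  have hlead := eval_div_nodal_sub_eval_div_nodal (x := algebraMap K F β) (y := algebraMap K F 0)
    ((algebraMap K F).injective.comp_injOn hα)
    ((natDegree_clearPoles_le c d hP).trans (by omega)) hroot
    (by simpa only [Function.comp_def, eval_nodal_algebraMap] using hNβ)
    (by simpa only [Function.comp_def, eval_nodal_algebraMap] using hN₀)
  simp only [Function.comp_def, eval_nodal_algebraMap] at hlead
  rw [map_zero, eval_zero_clearPoles, eval_pole_clearPoles, hs, coeff_clearPoles c d hP,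
    sub_zero] at hlead
  simp only [Algebra.smul_def, map_inv₀]
  field_simp at hlead ⊢
  linear_combination hlead

end Group

theorem div_eval_nodal_zero_ne_of_coset_ne {K ι : Type*} [Field K] {G : Subgroup Kˣ}
    {α : ι → Kˣ} (hα : ∀ j, α j ∈ G) {s t : Finset ι} (hst : #s = #t) {x y : Kˣ}
    (hxy : (x : Kˣ ⧸ G) ≠ y) :
    (x : K) / (nodal s fun j => (α j : K)).eval 0 ≠ y / (nodal t fun j => (α j : K)).eval 0 := by
  have hnodal (u : Finset ι) : (nodal u fun j => (α j : K)).eval 0 =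
      (((-1) ^ #u * ∏ j ∈ u, α j : Kˣ) : K) := by
    simp [eval_nodal, prod_neg]
  intro h
  simp only [hnodal, hst, ← Units.val_div_eq_div_val, Units.val_inj, div_eq_div_iff_mul_eq_mul,
    mul_left_comm _ ((-1 : Kˣ) ^ #t), mul_right_inj] at h
  have hquot : x⁻¹ * y = (∏ j ∈ t, α j) / ∏ j ∈ s, α j := by
    rw [inv_mul_eq_div, div_eq_div_iff_mul_eq_mul, ← h, mul_comm]
  refine hxy (QuotientGroup.eq.2 (hquot ▸ ?_))
  exact G.div_mem (G.prod_mem fun j _ => hα j) (G.prod_mem fun j _ => hα j)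

section HeavyCoefficients

variable {K F κ : Type*} [Field K] [Field F] [Algebra K F] {m : κ → F} {y₁ y₂ y₃ : F}

theorem heavyCoeffs_eq_zero_of_pair {i j : κ} (hij : i ≠ j) (hm : LinearIndepOn K m {i, j})
    {c d e t : K} (hd : d ≠ 0) (hi₂ : y₂ = c • y₁) (hi₃ : m i * y₃ = d • y₁)
    (hj : m j * y₃ = e • (y₁ - t • y₂)) : y₁ = 0 ∧ y₂ = 0 ∧ y₃ = 0 := by
  classical
  have hy₁ : y₁ ∈ Submodule.span K (({y₁} : Finset F) : Set F) :=
    Submodule.subset_span (by simp)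
  have hy₃ : y₃ = 0 := by
    refine eq_zero_of_forall_mul_mem_span (K := K) (m := m) (T := {i, j}) (W := {y₁})
      (by simpa using hm) (by simp [card_pair hij]) ?_
    simp only [mem_insert, mem_singleton, forall_eq_or_imp, forall_eq, hi₃, hj, hi₂]
    exact ⟨Submodule.smul_mem _ _ hy₁, Submodule.smul_mem _ _ (Submodule.sub_mem _ hy₁
      (Submodule.smul_mem _ _ (Submodule.smul_mem _ _ hy₁)))⟩
  have hy₁₀ : y₁ = 0 := by simpa [hy₃, hd] using hi₃.symm
  exact ⟨hy₁₀, by rw [hi₂, hy₁₀, smul_zero], hy₃⟩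

theorem heavyCoeffs_eq_zero_of_triple {T : Finset κ} (hT : 2 < #T) (hm : LinearIndepOn K m T)
    {e t : κ → K} (he : ∀ i ∈ T, e i ≠ 0) (ht : Set.InjOn t T)
    (h : ∀ i ∈ T, m i * y₃ = e i • (y₁ - t i • y₂)) : y₁ = 0 ∧ y₂ = 0 ∧ y₃ = 0 := by
  classical
  have hy₁ : y₁ ∈ Submodule.span K (({y₁, y₂} : Finset F) : Set F) :=
    Submodule.subset_span (by simp)
  have hy₂ : y₂ ∈ Submodule.span K (({y₁, y₂} : Finset F) : Set F) :=
    Submodule.subset_span (by simp)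
  have hy₃ : y₃ = 0 := by
    refine eq_zero_of_forall_mul_mem_span (W := {y₁, y₂}) hm (card_le_two.trans_lt hT)
      fun i hi => ?_
    rw [h i hi]
    exact Submodule.smul_mem _ _ (Submodule.sub_mem _ hy₁ (Submodule.smul_mem _ _ hy₂))
  have hrel (i : κ) (hi : i ∈ T) : y₁ = t i • y₂ := by
    simpa [hy₃, he i hi, sub_eq_zero] using (h i hi).symm
  obtain ⟨i, hi, j, hj, hij⟩ := one_lt_card.1 (by omega : 1 < #T)
  have hy₂₀ : y₂ = 0 := by
    have hdiff : (t i - t j) • y₂ = 0 := by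
      rw [sub_smul, ← hrel i hi, ← hrel j hj, sub_self]
    exact (smul_eq_zero.1 hdiff).resolve_left (sub_ne_zero.2 (ht.ne hi hj hij))
  exact ⟨by rw [hrel i hi, hy₂₀, smul_zero], hy₂₀, hy₃⟩

end HeavyCoefficients

section Construction

variable {K F ι κ : Type*} [Field K] [Field F] [Algebra K F] {G : Subgroup Kˣ} {α : ι → Kˣ}
  {β : K} {l : κ → Kˣ} {m : κ → F} {a : ℕ}

theorem heavyCoeffs_eq_zero [Fintype κ] (hα : Function.Injective α) (hαG : ∀ j, α j ∈ G)
    (hβ : β ≠ 0) (hαβ : ∀ j, (α j : K) ≠ β) (hl : Function.Injective fun i => (l i : Kˣ ⧸ G))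
    (hm : ∀ T : Finset κ, #T ≤ 3 → LinearIndepOn K m T) {S : κ → Finset ι}
    (hS : ∀ i, a ≤ #(S i)) (hsum : ∑ i, #(S i) = a * Fintype.card κ + 3) {P : κ → F[X]}
    (hP : ∀ i, (P i).natDegree ≤ a) {y₁ y₂ y₃ : F} (hlead : ∀ i, (P i).coeff a = y₁)
    (hroot : ∀ i, ∀ j ∈ S i, (clearPoles (P i) (algebraMap K F β) ((l i : K) • y₂)
      (m i * y₃)).eval (algebraMap K F (α j)) = 0) : y₁ = 0 ∧ y₂ = 0 ∧ y₃ = 0 := by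
  classical
  have hα' : Function.Injective fun j => (α j : K) := Units.val_injective.comp hα
  have hNβ (i : κ) : (nodal (S i) fun j => (α j : K)).eval β ≠ 0 :=
    eval_nodal_not_at_node fun j _ => (hαβ j).symm
  have hone (i : κ) (hi : #(S i) = a + 1) :
      m i * y₃ = (nodal (S i) fun j => (α j : K)).eval β •
        (y₁ - ((l i : K) / (nodal (S i) fun j => (α j : K)).eval 0) • y₂) := by
    have := residue_eq_smul_of_eval_clearPoles_eq_zero hα'.injOn (fun j _ => (α j).ne_zero) hβ
      (fun j _ => hαβ j) (hP i) (hroot i) hi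
    rwa [hlead, smul_smul, inv_mul_eq_div] at this
  have hexcess : ∑ i, (#(S i) - a) = 3 := by
    rw [sum_tsub_distrib _ fun i _ => hS i, hsum]
    simp [mul_comm]
  obtain ⟨i, -, hi⟩ | ⟨i, -, j, -, hij, hi, hj⟩ | ⟨T, -, hT, hT₁⟩ := sum_eq_three_cases hexcess
  · obtain ⟨h₁, h₂, h₃⟩ := eq_zero_of_eval_clearPoles_eq_zero hα'.injOn hβ (hP i) (hroot i)
      (by omega)
    have hmi : m i ≠ 0 := (hm {i} (by simp)).ne_zero (by simp)
    exact ⟨hlead i ▸ h₁, (smul_eq_zero.1 h₂).resolve_left (l i).ne_zero,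
      (mul_eq_zero.1 h₃).resolve_left hmi⟩
  · obtain ⟨h₂, h₃⟩ := eq_smul_of_eval_clearPoles_eq_zero hα'.injOn hβ (hP i) (hroot i)
      (by omega)
    rw [hlead] at h₂ h₃
    rw [← eq_inv_smul_iff₀ (l i).ne_zero, smul_smul] at h₂
    refine heavyCoeffs_eq_zero_of_pair hij ?_ (div_ne_zero (hNβ i) hβ) h₂ h₃ (hone j (by omega))
    simpa using hm {i, j} (card_le_two.trans (by norm_num))
  · have hcard (i : κ) (hi : i ∈ T) : #(S i) = a + 1 := by
      have := hT₁ i hi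
      omega
    refine heavyCoeffs_eq_zero_of_triple (by omega) (hm T hT.le) (fun i _ => hNβ i) ?_
      fun i hi => hone i (hcard i hi)
    intro i hi j hj heq
    by_contra hij
    exact div_eval_nodal_zero_ne_of_coset_ne hαG ((hcard i hi).trans (hcard j hj).symm)
      (hl.ne hij) heq

end Construction

theorem card_filter_mk_mem {κ ι : Type*} [DecidableEq κ] [DecidableEq ι] [Fintype ι]
    (E : Finset (κ × ι)) (i : κ) : #{j | (i, j) ∈ E} = #{x ∈ E | x.1 = i} := by
  rw [← card_map (Function.Embedding.sectR i ι)]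
  congr 1
  ext ⟨i', j⟩
  simp only [mem_map, mem_filter, mem_univ, true_and, Function.Embedding.sectR_apply,
    Prod.mk.injEq]
  grind

open scoped Matrix in
theorem isMRLRC_of_forall_vecMul_eq_zero {F : Type} [Field F] {g r a h : ℕ}
    {A : Fin g → Matrix (Fin a) (Fin r) F} {B : Fin g → Matrix (Fin h) (Fin r) F}
    (hA : ∀ i, ∀ S : Finset (Fin r), #S = a → LinearIndependent F fun (c : S) k => A i k c)
    (hH : ∀ S : Fin g → Finset (Fin r), (∀ i, a ≤ #(S i)) → ∑ i, #(S i) = a * g + h →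
      ∀ w, (∀ i, ∀ j ∈ S i, (w ᵥ* lrcParityCheck F g r a h A B) (i, j) = 0) → w = 0) :
    IsMRLRC F g r a h A B := by
  refine ⟨hA, fun E hE hEa => ?_⟩
  let M := (lrcParityCheck F g r a h A B).submatrix id ((↑) : E → Fin g × Fin r)
  suffices hM : LinearIndependent F M.row from
    linearIndependent_col_of_row (by simp [hE, mul_comm]) hM
  rw [← Matrix.vecMul_injective_iff]
  refine (injective_iff_map_eq_zero (Matrix.vecMulLinear M)).2 fun w hw => ?_
  refine hH (fun i => {j | (i, j) ∈ E}) (fun i => (card_filter_mk_mem E i).symm ▸ hEa i) ?_ w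
    fun i j hj => congrFun hw ⟨(i, j), by simpa using hj⟩
  rw [← hE, card_eq_sum_card_fiberwise fun x _ => mem_univ x.1]
  exact sum_congr rfl fun i _ => card_filter_mk_mem E i

section ParityMatrices

variable {R : Type*} [CommSemiring R] {g r a : ℕ}

/-- The local parity matrix shared by all groups: the transposed Vandermonde matrix with `a` rows
at the points `x`. -/
def vandermondeParity (a : ℕ) (x : Fin r → R) : Matrix (Fin a) (Fin r) R :=
  Matrix.of fun k j => x j ^ (k : ℕ)

/-- The polynomial of degree at most `a` by which the coefficient vector `w` of a combination of
rows acts on the `i`-th group: the local rows and the first heavy row contribute the monomials. -/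
noncomputable def groupPolynomial (w : (Fin g × Fin a) ⊕ Fin 3 → R) (i : Fin g) : R[X] :=
  ∑ k : Fin a, C (w (.inl (i, k))) * X ^ (k : ℕ) + C (w (.inr 0)) * X ^ a

variable (w : (Fin g × Fin a) ⊕ Fin 3 → R) (i : Fin g)

theorem natDegree_groupPolynomial_le : (groupPolynomial w i).natDegree ≤ a :=
  natDegree_add_le_of_degree_le
    (natDegree_sum_le_of_forall_le _ _ fun k _ => (natDegree_C_mul_X_pow_le _ _).trans k.2.le)
    (natDegree_C_mul_X_pow_le _ _)

theorem coeff_groupPolynomial_self : (groupPolynomial w i).coeff a = w (.inr 0) := by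
  simp [groupPolynomial, coeff_X_pow, fun k : Fin a => k.2.ne']

theorem coeff_groupPolynomial (k : Fin a) : (groupPolynomial w i).coeff k = w (.inl (i, k)) := by
  simp [groupPolynomial, coeff_X_pow, Fin.val_inj, k.2.ne]

theorem eval_groupPolynomial (z : R) :
    (groupPolynomial w i).eval z = ∑ k, w (.inl (i, k)) * z ^ (k : ℕ) + w (.inr 0) * z ^ a := by
  simp [groupPolynomial, eval_finsetSum]

end ParityMatrices

theorem linearIndependent_vandermondeParity {R : Type*} [CommRing R] [IsDomain R] {r a : ℕ}
    {x : Fin r → R} (hx : Function.Injective x) {S : Finset (Fin r)} (hS : #S ≤ a) :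
    LinearIndependent R fun (c : {j // j ∈ S}) (k : Fin a) => vandermondeParity a x k c.1 := by
  have hcol : (fun (c : {j // j ∈ S}) (k : Fin a) => vandermondeParity a x k c.1) =
      fun c : {j // j ∈ S} => ∑ k : Fin a, x c ^ (k : ℕ) • Pi.basisFun R (Fin a) k := by
    ext c k
    simp [vandermondeParity, Pi.single_apply]
  rw [hcol]
  exact linearIndependent_sum_pow_smul (Pi.basisFun R (Fin a)).linearIndependent hx.injOn hS

/-- The heavy parity matrix of a group: the values at `x` of the three functions
`X ^ a`, `l / X`, `m / (X - b)`. -/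
def heavyParity {F : Type*} [Field F] {r : ℕ} (a : ℕ) (x : Fin r → F) (b l m : F) :
    Matrix (Fin 3) (Fin r) F :=
  Matrix.of ![fun j => x j ^ a, fun j => l / x j, fun j => m / (x j - b)]

section ParityCheck

variable {F : Type} [Field F] {g r a : ℕ}

open scoped Matrix in
theorem vecMul_lrcParityCheck (w : (Fin g × Fin a) ⊕ Fin 3 → F) (i : Fin g)
    (x : Fin r → F) (b : F) (l m : Fin g → F) (j : Fin r) :
    (w ᵥ* lrcParityCheck F g r a 3 (fun _ => vandermondeParity a x)
      (fun i => heavyParity a x b (l i) (m i))) (i, j) =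
    (groupPolynomial w i).eval (x j) + l i * w (.inr 1) / x j +
      m i * w (.inr 2) / (x j - b) := by
  have hlocal : ∑ i', ∑ k, w (.inl (i', k)) * (if i' = i then vandermondeParity a x k j else 0) =
      ∑ k, w (.inl (i, k)) * x j ^ (k : ℕ) := by
    rw [sum_eq_single i (fun i' _ hi' => by simp [hi']) (by simp)]
    simp [vandermondeParity]
  simp only [Matrix.vecMul, dotProduct, lrcParityCheck, Fintype.sum_sum_type,
    Fintype.sum_prod_type, Sum.elim_inl, Sum.elim_inr, hlocal, heavyParity, Fin.sum_univ_three,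
    Matrix.of_apply, Matrix.cons_val, eval_groupPolynomial]
  ring

variable {K : Type*} [Field K] [Algebra K F] {G : Subgroup Kˣ} {α : Fin r → Kˣ} {β : K}
  {l : Fin g → Kˣ} {m : Fin g → F}

open scoped Matrix in
theorem eq_zero_of_vecMul_lrcParityCheck_eq_zero (hα : Function.Injective α) (hαG : ∀ j, α j ∈ G)
    (hβ : β ≠ 0) (hαβ : ∀ j, (α j : K) ≠ β) (hl : Function.Injective fun i => (l i : Kˣ ⧸ G))
    (hm : ∀ T : Finset (Fin g), #T ≤ 3 → LinearIndepOn K m T) {S : Fin g → Finset (Fin r)}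
    (hS : ∀ i, a ≤ #(S i)) (hsum : ∑ i, #(S i) = a * g + 3) {w : (Fin g × Fin a) ⊕ Fin 3 → F}
    (hw : ∀ i, ∀ j ∈ S i, (w ᵥ* lrcParityCheck F g r a 3
      (fun _ => vandermondeParity a fun j => algebraMap K F (α j))
      (fun i => heavyParity a (fun j => algebraMap K F (α j)) (algebraMap K F β)
        (algebraMap K F (l i)) (m i))) (i, j) = 0) : w = 0 := by
  simp only [vecMul_lrcParityCheck] at hw
  have hαF : Function.Injective fun j => algebraMap K F (α j) :=
    (algebraMap K F).injective.comp (Units.val_injective.comp hα)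
  obtain ⟨h₁, h₂, h₃⟩ : w (.inr 0) = 0 ∧ w (.inr 1) = 0 ∧ w (.inr 2) = 0 := by
    refine heavyCoeffs_eq_zero hα hαG hβ hαβ hl hm hS (by simpa using hsum)
      (fun i => natDegree_groupPolynomial_le w i) (fun i => coeff_groupPolynomial_self w i)
      fun i j hj => ?_
    rw [eval_clearPoles _ _ _ (by simp) ((algebraMap K F).injective.ne (hαβ j)),
      Algebra.smul_def, hw i j hj, mul_zero]
  have hgroup (i : Fin g) : groupPolynomial w i = 0 := by
    refine eq_zero_of_coeff_eq_zero_of_eval_eq_zero hαF.injOn (hS i)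
      (natDegree_groupPolynomial_le w i) ((coeff_groupPolynomial_self w i).trans h₁)
      fun j hj => ?_
    simpa [h₂, h₃] using hw i j hj
  ext (⟨i, k⟩ | k)
  · rw [← coeff_groupPolynomial w i k, hgroup, coeff_zero, Pi.zero_apply]
  · fin_cases k
    exacts [h₁, h₂, h₃]

theorem isMRLRC_vandermondeParity_heavyParity (hα : Function.Injective α) (hαG : ∀ j, α j ∈ G)
    (hβ : β ≠ 0) (hαβ : ∀ j, (α j : K) ≠ β) (hl : Function.Injective fun i => (l i : Kˣ ⧸ G))
    (hm : ∀ T : Finset (Fin g), #T ≤ 3 → LinearIndepOn K m T) :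
    IsMRLRC F g r a 3 (fun _ => vandermondeParity a fun j => algebraMap K F (α j))
      fun i => heavyParity a (fun j => algebraMap K F (α j)) (algebraMap K F β)
        (algebraMap K F (l i)) (m i) := by
  have hαF : Function.Injective fun j => algebraMap K F (α j) :=
    (algebraMap K F).injective.comp (Units.val_injective.comp hα)
  exact isMRLRC_of_forall_vecMul_eq_zero
    (fun _ S hS => linearIndependent_vandermondeParity hαF hS.le) fun _ hS hsum _ hw =>
      eq_zero_of_vecMul_lrcParityCheck_eq_zero hα hαG hβ hαβ hl hm hS hsum hw

end ParityCheck

theorem exists_finite_extension_finrank_eq (K : Type*) [Field K] [Fintype K] (n : ℕ) [NeZero n] :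
    ∃ (F : Type) (_ : Field F) (_ : Fintype F) (_ : Algebra K F),
      Fintype.card F = Fintype.card K ^ n ∧ Module.finrank K F = n := by
  obtain ⟨p, hp⟩ := CharP.exists K
  have : Fact p.Prime := ⟨CharP.char_is_prime K p⟩
  refine ⟨FiniteField.Extension K p n, inferInstance, Fintype.ofFinite _, inferInstance, ?_,
    FiniteField.finrank_extension K p n⟩
  rw [Fintype.card_eq_nat_card, Fintype.card_eq_nat_card, FiniteField.natCard_extension]

theorem exists_mrlrc_h3_of_subgroup_general (g r a : ℕ) (F₀ : Type*) [Field F₀] [Fintype F₀]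
    (hF₀ : r + 2 ≤ Fintype.card F₀) (G : Subgroup F₀ˣ) (hG1 : r ≤ Nat.card G)
    (hG2 : g ≤ G.index) : ExistsMRLRC g r 3 a (Fintype.card F₀ ^ 3) := by
  classical
  obtain ⟨F, _, _, _, hcard, hrank⟩ := exists_finite_extension_finrank_eq F₀ 3
  let v := Module.finBasisOfFinrankEq F₀ F hrank
  obtain ⟨α⟩ : Nonempty (Fin r ↪ G) := Function.Embedding.nonempty_of_card_le (by
    simpa [Nat.card_eq_fintype_card] using hG1)
  obtain ⟨c⟩ : Nonempty (Fin g ↪ F₀ˣ ⧸ G) := Function.Embedding.nonempty_of_card_le (by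
    simpa [Subgroup.index, Nat.card_eq_fintype_card] using hG2)
  obtain ⟨β, -, hβ⟩ : ∃ β ∈ univ, β ∉ insert 0 (univ.image fun j => ((α j : F₀ˣ) : F₀)) := by
    refine exists_mem_notMem_of_card_lt_card ((card_insert_le _ _).trans_lt ?_)
    have := card_image_le (s := univ) (f := fun j => ((α j : F₀ˣ) : F₀))
    simp only [card_univ, Fintype.card_fin] at this ⊢
    omega
  simp only [mem_insert, mem_image, mem_univ, true_and, not_or, not_exists] at hβ
  have hl : Function.Injective fun i => ((c i).out : F₀ˣ ⧸ G) := by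
    simpa using c.injective
  have hl' : Function.Injective fun i => ((c i).out : F₀) :=
    Units.val_injective.comp (Function.Injective.of_comp (f := ((↑) : F₀ˣ → F₀ˣ ⧸ G)) hl)
  exact ⟨F, _, _, hcard, _, _, isMRLRC_vandermondeParity_heavyParity
    (Subtype.val_injective.comp α.injective) (fun j => (α j).2) hβ.1 hβ.2 hl fun T hT =>
      linearIndependent_sum_pow_smul v.linearIndependent hl'.injOn hT⟩

/-- **Lemma 5.4.** Let `r ∣ n`, `a < r`, `g = n/r`, and `n - g·a - 3 > 0`. Let `q₀ ≥ 2r+3`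
be a prime power (realized as the order of a finite field `F₀`) such that `F₀ˣ` contains
a subgroup `G` of size at least `r + 2` with at least `n/r` cosets. Then there exists a
maximally recoverable `(n, r, h = 3, a, q = q₀³)`-local reconstruction code. -/
theorem exists_mrlrc_h3_of_subgroup
    (n r a q₀ : ℕ) (hr : 0 < r) (hrn : r ∣ n) (har : a < r)
    (hk : (n / r) * a + 3 < n) (hq₀ : 2 * r + 3 ≤ q₀)
    (F₀ : Type) [Field F₀] [Fintype F₀] (hF₀ : Fintype.card F₀ = q₀)
    (G : Subgroup F₀ˣ) (hG1 : r + 2 ≤ Nat.card G) (hG2 : n / r ≤ G.index) :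
    ExistsMRLRC (n / r) r 3 a (q₀ ^ 3) := by
  subst hF₀
  exact exists_mrlrc_h3_of_subgroup_general _ r a F₀ (by omega) G (by omega) hG2
end

section
/- Let q be a prime power and let A ⊆ ℙ𝔽_q^2 be a nonempty set with matching collinear triples. Then |A| ≤ q + 3. -/
/-!
Project from a point `p ∈ A`. Two points have the same image exactly when they are collinear with
`p`, so once `p` and one further point `c` of its triple are removed, the projection is injective
on the rest of `A`. Its values are the lines through `p`, of which there are `q + 1` in the plane.
-/

/-- Three points of the projective plane `ℙ F (Fin 3 → F)` are collinear if they lie on a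
common projective line, i.e. their representative lines are contained in a linear subspace
of `F³` of dimension at most `2`. -/
def ProjCollinear (F : Type) [Field F]
    (p₁ p₂ p₃ : Projectivization F (Fin 3 → F)) : Prop :=
  ∃ W : Submodule F (Fin 3 → F), Module.finrank F W ≤ 2 ∧
    p₁.submodule ≤ W ∧ p₂.submodule ≤ W ∧ p₃.submodule ≤ W

/-- A finite set `A` of points of the projective plane `ℙ F (Fin 3 → F)` has
*matching collinear triples* if `A` can be partitioned into triples such that the only
collinear triples of pairwise distinct points of `A` are the triples of the partition. -/
def HasMatchingCollinearTriples (F : Type) [Field F]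
    (A : Finset (Projectivization F (Fin 3 → F))) : Prop :=
  ∃ T : Finset (Finset (Projectivization F (Fin 3 → F))),
    (∀ t ∈ T, t.card = 3) ∧
    ((T : Set (Finset (Projectivization F (Fin 3 → F)))).PairwiseDisjoint id) ∧
    ((A : Set (Projectivization F (Fin 3 → F))) = ⋃ t ∈ T, (t : Set _)) ∧
    (∀ p₁ ∈ A, ∀ p₂ ∈ A, ∀ p₃ ∈ A, p₁ ≠ p₂ → p₁ ≠ p₃ → p₂ ≠ p₃ →
      (ProjCollinear F p₁ p₂ p₃ ↔ ∃ t ∈ T, (t : Set _) = {p₁, p₂, p₃}))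

open Projectivization Module
open scoped LinearAlgebra.Projectivization

section DivisionRing

variable {K V : Type*} [DivisionRing K] [AddCommGroup V] [Module K V]

theorem linearIndependent_finCons_iff_mkQ_comp {n : ℕ} {v : V} {w : Fin n → V} (hv : v ≠ 0) :
    LinearIndependent K (Fin.cons v w : Fin (n + 1) → V) ↔
      LinearIndependent K ((Submodule.span K {v}).mkQ ∘ w) := by
  rw [linearIndependent_finCons, ← Submodule.disjoint_span_singleton' hv]
  refine ⟨fun ⟨hw, hdisj⟩ ↦ hw.map (by rwa [Submodule.ker_mkQ]), fun h ↦ ⟨.of_comp _ h, ?_⟩⟩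
  simpa only [Submodule.ker_mkQ] using Submodule.range_ker_disjoint h

theorem mkQ_submodule_rep_ne_zero {p x : ℙ K V} (hx : x ≠ p) : p.submodule.mkQ x.rep ≠ 0 := by
  rw [Submodule.mkQ_apply, Ne, Submodule.Quotient.mk_eq_zero, submodule_eq,
    Submodule.mem_span_singleton, ← mk_eq_mk_iff' K _ _ x.rep_nonzero p.rep_nonzero, mk_rep, mk_rep]
  exact hx

/-- The projection from the point `p` of a projective space, defined away from `p`. The points of
`ℙ K (V ⧸ p.submodule)` stand for the lines through `p`. -/
noncomputable def projectFrom (p x : ℙ K V) (hx : x ≠ p) : ℙ K (V ⧸ p.submodule) :=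
  mk K (p.submodule.mkQ x.rep) (mkQ_submodule_rep_ne_zero hx)

theorem projectFrom_ne_iff_independent {p x y : ℙ K V} (hx : x ≠ p) (hy : y ≠ p) :
    projectFrom p x hx ≠ projectFrom p y hy ↔ Independent ![p, x, y] := by
  have hrep : Projectivization.rep ∘ ![p, x, y] = Fin.cons p.rep ![x.rep, y.rep] := by
    ext i : 1
    fin_cases i <;> rfl
  have hmkQ : p.submodule.mkQ ∘ ![x.rep, y.rep] =
      ![p.submodule.mkQ x.rep, p.submodule.mkQ y.rep] := by
    ext i : 1
    fin_cases i <;> rfl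
  rw [independent_iff, hrep, linearIndependent_finCons_iff_mkQ_comp p.rep_nonzero, ← submodule_eq,
    hmkQ, ← independent_mk_iff_LinearIndependent, independent_pair_iff_ne]
  rfl

theorem card_le_card_projectivization_quotient {p : ℙ K V} [Finite (ℙ K (V ⧸ p.submodule))]
    {S : Finset (ℙ K V)} (hp : p ∉ S)
    (hS : (S : Set (ℙ K V)).Pairwise fun x y ↦ Independent ![p, x, y]) :
    S.card ≤ Nat.card (ℙ K (V ⧸ p.submodule)) := by
  have hne (x : S) : x.1 ≠ p := fun h ↦ hp (h ▸ x.2)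
  have hinj : Function.Injective fun x : S ↦ projectFrom p x.1 (hne x) := by
    intro x y hxy
    by_contra h
    exact (projectFrom_ne_iff_independent (hne x) (hne y)).2
      (hS x.2 y.2 (Subtype.coe_ne_coe.2 h)) hxy
  simpa using Nat.card_le_card_of_injective _ hinj

theorem finrank_quotient_submodule {n : ℕ} (hV : finrank K V = n + 1) (p : ℙ K V) :
    finrank K (V ⧸ p.submodule) = n := by
  have : Module.Finite K V := Module.finite_of_finrank_eq_succ hV
  have := Submodule.finrank_quotient_add_finrank p.submodule
  rw [finrank_submodule, hV] at this
  exact Nat.add_right_cancel this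

end DivisionRing

theorem projCollinear_iff_dependent {F : Type} [Field F] {x y z : ℙ F (Fin 3 → F)} :
    ProjCollinear F x y z ↔ Dependent ![x, y, z] := by
  have hspan (W : Submodule F (Fin 3 → F)) :
      Submodule.span F (Set.range (Projectivization.rep ∘ ![x, y, z])) ≤ W ↔
        x.submodule ≤ W ∧ y.submodule ≤ W ∧ z.submodule ≤ W := by
    simp [Submodule.span_le, Set.range_subset_iff, Fin.forall_fin_succ, submodule_eq]
  rw [dependent_iff, linearIndependent_iff_card_le_finrank_span, Fintype.card_fin, not_le,
    Nat.lt_succ_iff]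
  constructor
  · rintro ⟨W, hW, hxyz⟩
    exact (Submodule.finrank_mono ((hspan W).2 hxyz)).trans hW
  · exact fun h ↦ ⟨_, h, (hspan _).1 le_rfl⟩

theorem HasMatchingCollinearTriples.exists_pairwise_independent {F : Type} [Field F]
    {A : Finset (ℙ F (Fin 3 → F))} (hA : HasMatchingCollinearTriples F A)
    {p : ℙ F (Fin 3 → F)} (hp : p ∈ A) :
    ∃ c, ((A : Set (ℙ F (Fin 3 → F))) \ {p, c}).Pairwise fun x y ↦ Independent ![p, x, y] := by
  obtain ⟨T, hcard, hdisj, hcover, hcol⟩ := hA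
  obtain ⟨t, ht, hpt⟩ : ∃ t ∈ T, p ∈ t := by
    rw [← Finset.mem_coe, hcover] at hp
    simpa using hp
  obtain ⟨c, hct, hcp⟩ := Finset.exists_mem_ne (by rw [hcard t ht]; norm_num) p
  refine ⟨c, fun x ⟨hxA, hx⟩ y ⟨hyA, hy⟩ hxy ↦ ?_⟩
  simp only [Set.mem_insert_iff, Set.mem_singleton_iff, not_or] at hx hy
  rw [independent_iff_not_dependent, ← projCollinear_iff_dependent,
    hcol p hp x hxA y hyA (Ne.symm hx.1) (Ne.symm hy.1) hxy]
  rintro ⟨s, hs, hspxy⟩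
  have hmem (z : ℙ F (Fin 3 → F)) : z ∈ s ↔ z = p ∨ z = x ∨ z = y := by
    rw [← Finset.mem_coe, hspxy]
    rfl
  obtain rfl : s = t := hdisj.elim_finset hs ht p ((hmem p).2 (.inl rfl)) hpt
  exact ((hmem c).1 hct).elim hcp (Or.elim · (Ne.symm hx.2) (Ne.symm hy.2))

/-- Only the triples through the single point `p` matter: `hA` asks that every collinear triple of
distinct points of `A` through `p` contain `c`. -/
theorem card_le_of_hasMatchingCollinearTriples_general
    {K V : Type*} [Field K] [Finite K] [AddCommGroup V] [Module K V] {n : ℕ}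
    (hV : finrank K V = n + 1) {A : Finset (ℙ K V)} {p c : ℙ K V}
    (hA : ((A : Set (ℙ K V)) \ {p, c}).Pairwise fun x y ↦ Independent ![p, x, y]) :
    A.card ≤ (∑ i ∈ Finset.range n, Nat.card K ^ i) + 2 := by
  classical
  have : Module.Finite K V := Module.finite_of_finrank_eq_succ hV
  have : Finite (V ⧸ p.submodule) := Module.finite_of_finite K
  calc A.card ≤ (A \ {p, c}).card + ({p, c} : Finset (ℙ K V)).card :=
        Finset.card_le_card_sdiff_add_card
    _ ≤ Nat.card (ℙ K (V ⧸ p.submodule)) + 2 :=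
        add_le_add (card_le_card_projectivization_quotient (by simp) (by simpa using hA))
          Finset.card_le_two
    _ = (∑ i ∈ Finset.range n, Nat.card K ^ i) + 2 := by
        rw [card_of_finrank K _ (finrank_quotient_submodule hV p)]

/-- Any nonempty subset of the projective plane over `F_q` with matching collinear
triples has at most `q + 3` points. -/
theorem card_le_of_hasMatchingCollinearTriples
    (F : Type) [Field F] [Fintype F]
    (A : Finset (Projectivization F (Fin 3 → F))) (hA : A.Nonempty)
    (hmct : HasMatchingCollinearTriples F A) :
    A.card ≤ Fintype.card F + 3 := by
  obtain ⟨p, hp⟩ := hA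
  obtain ⟨c, hc⟩ := hmct.exists_pairwise_independent hp
  simpa [Finset.sum_range_succ, add_comm 1, add_assoc] using
    card_le_of_hasMatchingCollinearTriples_general (finrank_fin_fun F) hc
end

section
/- There exists an absolute constant C > 0 such that for every prime power q there exists a set A ⊆ ℙ𝔽_q^2 with matching collinear triples satisfying |A| ≥ q · exp(−C·√(log q)). -/
/-!
The smooth points of the nodal cubic `xyz = y³ - x³` form a group isomorphic to `Fˣ`, which is
cyclic of order `q - 1`, and three distinct ones are collinear exactly when their product is `1`.
It therefore suffices to find many disjoint triples of integers such that three distinct entries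
sum to `0` exactly when they form one of the triples, with entries so small that a sum of three of
them vanishes modulo `q - 1` only if it vanishes in `ℤ`. If `S ⊆ [0, L)` contains no three-term
arithmetic progression, the triples `(L + x, 3L + x, -4L - 2x)` for `x ∈ S` have this property:
the three blocks are placed so that a zero sum must use one entry from each, say with parameters
`x, y, z`, and then `x + y = 2z`. Behrend's theorem provides such an `S` of size
`L exp (-4 √(log L))`, and `L` can be taken proportional to `q`.
-/

open Finset
open scoped LinearAlgebra.Projectivization

/-- A family of triples, the `i`-th one being `u (i, 0), u (i, 1), u (i, 2)`, *matches* a ternary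
relation `R` if all entries are distinct and `R` holds for three distinct entries exactly
when they form one of the triples. An arbitrary `R` is allowed so that such a family can be moved
from `ℤ` to a cyclic group and on to the projective plane. -/
structure IsMatchingFamily {ι α : Type*} (R : α → α → α → Prop) (u : ι × Fin 3 → α) : Prop where
  injective : Function.Injective u
  rel_iff : ∀ ⦃a b c⦄, a ≠ b → a ≠ c → b ≠ c →
    (R (u a) (u b) (u c) ↔ a.1 = b.1 ∧ a.1 = c.1)

section Family

variable {ι : Type*}

lemma singleton_product_univ_eq_triple_iff [DecidableEq ι] {i : ι} {a b c : ι × Fin 3}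
    (hab : a ≠ b) (hac : a ≠ c) (hbc : b ≠ c) :
    ({i} ×ˢ univ : Finset (ι × Fin 3)) = {a, b, c} ↔ a.1 = i ∧ b.1 = i ∧ c.1 = i := by
  have hcard : #{a, b, c} = 3 := card_eq_three.2 ⟨a, b, c, hab, hac, hbc, rfl⟩
  rw [eq_comm, ← subset_iff_eq_of_card_le (by simp [hcard])]
  simp only [insert_subset_iff, singleton_subset_iff, mem_product, mem_singleton, mem_univ,
    and_true]

lemma IsMatchingFamily.hasMatchingCollinearTriples {F : Type} [Field F] [Fintype ι]
    {u : ι × Fin 3 → ℙ F (Fin 3 → F)} (hu : IsMatchingFamily (ProjCollinear F) u) :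
    HasMatchingCollinearTriples F (univ.map ⟨u, hu.injective⟩) := by
  classical
  let e : ι × Fin 3 ↪ ℙ F (Fin 3 → F) := ⟨u, hu.injective⟩
  let triple (i : ι) : Finset (ℙ F (Fin 3 → F)) := ({i} ×ˢ univ).map e
  have triple_eq_iff {i : ι} {a b c : ι × Fin 3} (hab : a ≠ b) (hac : a ≠ c) (hbc : b ≠ c) :
      (triple i : Set (ℙ F (Fin 3 → F))) = {u a, u b, u c} ↔ a.1 = i ∧ b.1 = i ∧ c.1 = i := by
    rw [← singleton_product_univ_eq_triple_iff hab hac hbc, ← map_inj (f := e), ← coe_inj]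
    simp [triple, e]
  refine ⟨univ.image triple, ?_, ?_, ?_, ?_⟩
  · simp [triple]
  · simp only [coe_image, coe_univ, Set.image_univ]
    rintro _ ⟨i, rfl⟩ _ ⟨j, rfl⟩ hij
    have hij : i ≠ j := fun h => hij (congrArg triple h)
    exact (disjoint_map e).2 (disjoint_product.2 (.inl (by simpa using hij)))
  · ext p
    simp [triple, e]
  · simp only [mem_map, mem_univ, true_and, Function.Embedding.coeFn_mk]
    rintro _ ⟨a, rfl⟩ _ ⟨b, rfl⟩ _ ⟨c, rfl⟩ hab hac hbc
    have hab := ne_of_apply_ne u hab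
    have hac := ne_of_apply_ne u hac
    have hbc := ne_of_apply_ne u hbc
    simp only [hu.rel_iff hab hac hbc, exists_mem_image, mem_univ, true_and,
      triple_eq_iff hab hac hbc]
    grind

lemma IsMatchingFamily.zpow {G : Type*} [Group G] {g : G} {M : ℤ} {u : ι × Fin 3 → ℤ}
    (hu : IsMatchingFamily (fun i j k => i + j + k = 0) u) (hM : ∀ a, |u a| < M)
    (hg : 3 * M ≤ orderOf g) :
    IsMatchingFamily (fun x y z : G => x * y * z = 1) (fun a => g ^ u a) where
  injective a b hab := by
    have hdvd : (orderOf g : ℤ) ∣ u b - u a := (zpow_eq_zpow_iff_modEq.1 hab).dvd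
    have hlt : |u b - u a| < orderOf g := by grind
    exact hu.injective (sub_eq_zero.1 (Int.eq_zero_of_abs_lt_dvd hdvd hlt)).symm
  rel_iff a b c hab hac hbc := by
    have hlt : |u a + u b + u c| < orderOf g := by grind
    rw [← hu.rel_iff hab hac hbc, ← zpow_add, ← zpow_add, ← orderOf_dvd_iff_zpow_eq_one]
    exact ⟨fun hdvd => Int.eq_zero_of_abs_lt_dvd hdvd hlt, fun h => h ▸ dvd_zero _⟩

end Family

section Exponents

/-- The triple of integers attached to `x`: its entries sum to `0` and, for `x < L`, lie in disjoint
intervals. The multiples `1, 3, -4` of `L` are chosen such that for any other choice of three of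
these intervals, repetitions allowed, the sums of their elements have a constant nonzero sign. -/
def zeroSumTriple (L x : ℕ) : Fin 3 → ℤ
  | 0 => L + x
  | 1 => 3 * L + x
  | 2 => -4 * L - 2 * x

variable {L x y z : ℕ} {c d e : Fin 3}

lemma abs_zeroSumTriple_lt (hx : x < L) : |zeroSumTriple L x c| < 6 * L := by
  fin_cases c <;> grind [zeroSumTriple]

lemma eq_of_zeroSumTriple_eq (hx : x < L) (hy : y < L)
    (h : zeroSumTriple L x c = zeroSumTriple L y d) : x = y ∧ c = d := by
  fin_cases c <;> fin_cases d <;> grind [zeroSumTriple]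

lemma sum_zeroSumTriple_of_ne (hcd : c ≠ d) (hce : c ≠ e) (hde : d ≠ e) :
    zeroSumTriple L x c + zeroSumTriple L x d + zeroSumTriple L x e = 0 := by
  fin_cases c <;> fin_cases d <;> fin_cases e <;> grind [zeroSumTriple]

lemma midpoint_of_sum_zeroSumTriple_eq_zero (hx : x < L) (hy : y < L) (hz : z < L)
    (h : zeroSumTriple L x c + zeroSumTriple L y d + zeroSumTriple L z e = 0) :
    x + y = z + z ∨ x + z = y + y ∨ y + z = x + x := by
  fin_cases c <;> fin_cases d <;> fin_cases e <;> grind [zeroSumTriple]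

lemma isMatchingFamily_zeroSumTriple {S : Set ℕ} (hS : ThreeAPFree S) (hSL : ∀ x ∈ S, x < L) :
    IsMatchingFamily (fun i j k : ℤ => i + j + k = 0)
      (fun a : S × Fin 3 => zeroSumTriple L a.1 a.2) where
  injective a b hab := by
    obtain ⟨hx, hc⟩ := eq_of_zeroSumTriple_eq (hSL _ a.1.2) (hSL _ b.1.2) hab
    exact Prod.ext (Subtype.ext hx) hc
  rel_iff := by
    rintro ⟨⟨x, hx⟩, c⟩ ⟨⟨y, hy⟩, d⟩ ⟨⟨z, hz⟩, e⟩ hab hac hbc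
    simp only [Subtype.mk.injEq]
    constructor
    · intro h
      rcases midpoint_of_sum_zeroSumTriple_eq_zero (hSL x hx) (hSL y hy) (hSL z hz) h
        with hxy | hxz | hyz
      · have := hS hx hz hy hxy
        lia
      · have := hS hx hy hz hxz
        lia
      · have := hS hy hx hz hyz
        lia
    · rintro ⟨rfl, rfl⟩
      apply sum_zeroSumTriple_of_ne <;> simp_all

end Exponents

section Plane

lemma linearIndependent_iff_forall_card_le_finrank {K V ι : Type*} [DivisionRing K]
    [AddCommGroup V] [Module K V] [Module.Finite K V] [Fintype ι] {v : ι → V} :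
    LinearIndependent K v ↔
      ∀ W : Submodule K V, (∀ i, v i ∈ W) → Fintype.card ι ≤ Module.finrank K W := by
  rw [linearIndependent_iff_card_le_finrank_span]
  refine ⟨fun h W hW => h.trans (Submodule.finrank_mono ?_), fun h => h _ fun i => ?_⟩
  · exact Submodule.span_le.2 (Set.range_subset_iff.2 hW)
  · exact Submodule.subset_span (Set.mem_range_self i)

variable (F : Type) [Field F]

lemma projCollinear_mk_iff_det_eq_zero (v : Fin 3 → Fin 3 → F) (hv : ∀ i, v i ≠ 0) :
    ProjCollinear F (.mk F (v 0) (hv 0)) (.mk F (v 1) (hv 1)) (.mk F (v 2) (hv 2)) ↔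
      (Matrix.of v).det = 0 := by
  have hdet : (Matrix.of v).det ≠ 0 ↔ LinearIndependent F v := by
    rw [← isUnit_iff_ne_zero, ← Matrix.isUnit_iff_isUnit_det,
      ← Matrix.linearIndependent_rows_iff_isUnit]
    rfl
  rw [← not_iff_not, ← ne_eq (Matrix.det _), hdet, linearIndependent_iff_forall_card_le_finrank]
  simp only [ProjCollinear, Projectivization.submodule_mk, Submodule.span_singleton_le_iff_mem,
    Fin.forall_fin_succ, Fintype.card_fin]
  grind

/-- Homogeneous coordinates of the point with parameter `t` on the nodal cubic
`xyz = y³ - x³`, whose node is `(0 : 0 : 1)`. -/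
def nodalVec (t : Fˣ) : Fin 3 → F :=
  ![t, t ^ 2, t ^ 3 - 1]

variable {F}

lemma nodalVec_ne_zero (t : Fˣ) : nodalVec F t ≠ 0 :=
  fun h => t.ne_zero (congrFun h 0)

/-- The parametrization by `Fˣ` of the smooth points of the nodal cubic `xyz = y³ - x³`. -/
def nodalPoint (t : Fˣ) : ℙ F (Fin 3 → F) :=
  .mk F (nodalVec F t) (nodalVec_ne_zero t)

lemma nodalPoint_injective : Function.Injective (nodalPoint (F := F)) := by
  intro s t h
  obtain ⟨a, ha⟩ := (Projectivization.mk_eq_mk_iff' F _ _ _ _).1 h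
  have hx : a * t = s := congrFun ha 0
  have hy : a * t ^ 2 = s ^ 2 := congrFun ha 1
  exact Units.ext (mul_left_cancel₀ s.ne_zero (by linear_combination t * hx - hy))

lemma det_nodalVec (a b c : Fˣ) :
    (Matrix.of ![nodalVec F a, nodalVec F b, nodalVec F c]).det =
      ((b - a) * (c - a) * (c - b)) * (a * b * c - 1) := by
  simp only [Matrix.det_fin_three, Matrix.of_apply, Matrix.cons_val, nodalVec]
  ring

lemma projCollinear_nodalPoint_iff {a b c : Fˣ} (hab : a ≠ b) (hac : a ≠ c) (hbc : b ≠ c) :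
    ProjCollinear F (nodalPoint a) (nodalPoint b) (nodalPoint c) ↔ a * b * c = 1 := by
  have hvandermonde : ((b : F) - a) * (c - a) * (c - b) ≠ 0 := by
    simp only [ne_eq, mul_eq_zero, sub_eq_zero, Units.val_inj, hab.symm, hac.symm, hbc.symm,
      or_self, not_false_eq_true]
  calc
    _ ↔ (Matrix.of ![nodalVec F a, nodalVec F b, nodalVec F c]).det = 0 :=
      projCollinear_mk_iff_det_eq_zero F ![nodalVec F a, nodalVec F b, nodalVec F c]
        (by simp [Fin.forall_fin_succ, nodalVec_ne_zero])
    _ ↔ (a * b * c : F) = 1 := by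
      rw [det_nodalVec, mul_eq_zero, or_iff_right hvandermonde, sub_eq_zero]
    _ ↔ a * b * c = 1 := by rw [← Units.val_inj]; push_cast; rfl

lemma IsMatchingFamily.nodalPoint_comp {ι : Type*} {u : ι × Fin 3 → Fˣ}
    (hu : IsMatchingFamily (fun a b c => a * b * c = 1) u) :
    IsMatchingFamily (ProjCollinear F) (nodalPoint ∘ u) where
  injective := nodalPoint_injective.comp hu.injective
  rel_iff _ _ _ hab hac hbc := by
    rw [← hu.rel_iff hab hac hbc]
    exact projCollinear_nodalPoint_iff (hu.injective.ne hab) (hu.injective.ne hac)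
      (hu.injective.ne hbc)

variable (F)

lemma exists_hasMatchingCollinearTriples_card_eq_three_mul_rothNumberNat [Fintype F] {L : ℕ}
    (hL : 18 * L < Fintype.card F) :
    ∃ A : Finset (ℙ F (Fin 3 → F)),
      HasMatchingCollinearTriples F A ∧ #A = 3 * rothNumberNat L := by
  obtain ⟨S, hSL, hcard, hS⟩ := rothNumberNat_spec L
  have hSL (x : ℕ) (hx : x ∈ S) : x < L := mem_range.1 (hSL hx)
  obtain ⟨g, hg⟩ := IsCyclic.exists_ofOrder_eq_natCard (α := Fˣ)
  rw [Nat.card_units, Nat.card_eq_fintype_card] at hg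
  have hu := ((isMatchingFamily_zeroSumTriple hS hSL).zpow (g := g) (M := 6 * L)
    (fun a => abs_zeroSumTriple_lt (hSL _ a.1.2)) (by lia)).nodalPoint_comp
  refine ⟨_, hu.hasMatchingCollinearTriples, ?_⟩
  simp [hcard, mul_comm]

lemma exists_hasMatchingCollinearTriples_card_eq_three :
    ∃ A : Finset (ℙ F (Fin 3 → F)), HasMatchingCollinearTriples F A ∧ #A = 3 := by
  let v : Fin 3 → Fin 3 → F := ![![1, 0, 0], ![0, 1, 0], ![1, 1, 0]]
  have hv (i : Fin 3) : v i ≠ 0 := by fin_cases i <;> simp [v]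
  let u : Unit × Fin 3 → ℙ F (Fin 3 → F) := fun a => .mk F (v a.2) (hv a.2)
  have hinj : Function.Injective u := by
    rintro ⟨_, i⟩ ⟨_, j⟩ hij
    obtain ⟨s, hs⟩ := (Projectivization.mk_eq_mk_iff' F _ _ _ _).1 hij
    have h0 := congrFun hs 0
    have h1 := congrFun hs 1
    fin_cases i <;> fin_cases j <;> simp_all [v]
  have hcol (a b c : Unit × Fin 3) : ProjCollinear F (u a) (u b) (u c) := by
    refine (projCollinear_mk_iff_det_eq_zero F (fun i => v (![a, b, c] i).2) fun i => hv _).2 ?_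
    refine Matrix.det_eq_zero_of_column_eq_zero 2 fun i => ?_
    have hlast (j : Fin 3) : v j 2 = 0 := by fin_cases j <;> rfl
    exact hlast _
  have hu : IsMatchingFamily (ProjCollinear F) u :=
    { injective := hinj
      rel_iff a b c _ _ _ := iff_of_true (hcol a b c) ⟨rfl, rfl⟩ }
  exact ⟨_, hu.hasMatchingCollinearTriples, by simp⟩

end Plane

section Estimates

lemma exp_neg_sqrt_log_le_half {x : ℝ} (hx : 2 ≤ x) : Real.exp (-√(Real.log x)) ≤ 1 / 2 := by
  have hlog : Real.log 2 ≤ √(Real.log x) := by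
    apply Real.le_sqrt_of_sq_le
    calc
      Real.log 2 ^ 2 ≤ Real.log 2 := by
        nlinarith [Real.log_two_gt_d9, Real.log_two_lt_d9]
      _ ≤ Real.log x := Real.log_le_log two_pos hx
  calc
    Real.exp (-√(Real.log x)) ≤ Real.exp (-Real.log 2) := by gcongr
    _ = 1 / 2 := by rw [Real.exp_neg, Real.exp_log two_pos, one_div]

lemma exp_neg_eight_mul_sqrt_log_le {x : ℝ} (hx : 2 ≤ x) :
    Real.exp (-8 * √(Real.log x)) ≤ 1 / 16 * Real.exp (-4 * √(Real.log x)) := by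
  calc
    Real.exp (-8 * √(Real.log x)) =
        Real.exp (-√(Real.log x)) ^ 4 * Real.exp (-4 * √(Real.log x)) := by
      rw [← Real.exp_nat_mul, ← Real.exp_add]
      ring_nf
    _ ≤ (1 / 2) ^ 4 * Real.exp (-4 * √(Real.log x)) := by
      gcongr
      exact exp_neg_sqrt_log_le_half hx
    _ = 1 / 16 * Real.exp (-4 * √(Real.log x)) := by norm_num

lemma mul_exp_neg_four_mul_sqrt_log_le_rothNumberNat {L : ℕ} {x : ℝ} (hLx : L ≤ x) :
    L * Real.exp (-4 * √(Real.log x)) ≤ rothNumberNat L := by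
  rcases L.eq_zero_or_pos with rfl | hL
  · simp
  have hmono : √(Real.log L) ≤ √(Real.log x) := by gcongr
  calc
    L * Real.exp (-4 * √(Real.log x)) ≤ L * Real.exp (-4 * √(Real.log L)) := by
      gcongr ?_ * Real.exp ?_
      linarith
    _ ≤ rothNumberNat L := Behrend.roth_lower_bound

lemma mul_exp_neg_eight_mul_sqrt_log_le_three {x : ℝ} (hx : 2 ≤ x) (hx' : x ≤ 48) :
    x * Real.exp (-8 * √(Real.log x)) ≤ 3 := by
  have hexp : Real.exp (-4 * √(Real.log x)) ≤ 1 := by simp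
  calc
    x * Real.exp (-8 * √(Real.log x)) ≤ 48 * (1 / 16 * 1) := by
      gcongr
      exact (exp_neg_eight_mul_sqrt_log_le hx).trans (by gcongr)
    _ = 3 := by norm_num

lemma mul_exp_neg_eight_mul_sqrt_log_le_three_mul_rothNumberNat {L : ℕ} {x : ℝ} (hx : 2 ≤ x)
    (hLx : L ≤ x) (hxL : x ≤ 48 * L) :
    x * Real.exp (-8 * √(Real.log x)) ≤ 3 * rothNumberNat L := by
  calc
    x * Real.exp (-8 * √(Real.log x))
      ≤ 48 * L * (1 / 16 * Real.exp (-4 * √(Real.log x))) := by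
      gcongr
      exact exp_neg_eight_mul_sqrt_log_le hx
    _ = 3 * (L * Real.exp (-4 * √(Real.log x))) := by ring
    _ ≤ 3 * rothNumberNat L := by
      gcongr
      exact mul_exp_neg_four_mul_sqrt_log_le_rothNumberNat hLx

end Estimates

/-- **Lemma 6.2.** There is an absolute constant `C > 0` such that for every prime power
`q` (realized as the order of a finite field `F`) there is a set `A ⊆ ℙ F_q²` with
matching collinear triples of size at least `q · exp(-C·√(log q))`. -/
theorem exists_large_hasMatchingCollinearTriples :
    ∃ C : ℝ, 0 < C ∧
      ∀ (F : Type) (_ : Field F) (_ : Fintype F),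
        ∃ A : Finset (Projectivization F (Fin 3 → F)),
          HasMatchingCollinearTriples F A ∧
          (Fintype.card F : ℝ) *
              Real.exp (-C * Real.sqrt (Real.log (Fintype.card F))) ≤ (A.card : ℝ) := by
  refine ⟨8, by norm_num, fun F _ _ => ?_⟩
  have hq : (2 : ℝ) ≤ Fintype.card F := mod_cast Fintype.one_lt_card (α := F)
  rcases le_or_gt (Fintype.card F) 18 with hsmall | hlarge
  · obtain ⟨A, hA, hcard⟩ := exists_hasMatchingCollinearTriples_card_eq_three F
    have hq' : (Fintype.card F : ℝ) ≤ 48 := mod_cast hsmall.trans (by norm_num)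
    exact ⟨A, hA, by simpa [hcard] using mul_exp_neg_eight_mul_sqrt_log_le_three hq hq'⟩
  · obtain ⟨L, hL, hLq, hqL⟩ :
        ∃ L, 18 * L < Fintype.card F ∧ L ≤ Fintype.card F ∧ Fintype.card F ≤ 48 * L :=
      ⟨(Fintype.card F - 1) / 18, by lia, by lia, by lia⟩
    obtain ⟨A, hA, hcard⟩ :=
      exists_hasMatchingCollinearTriples_card_eq_three_mul_rothNumberNat F hL
    refine ⟨A, hA, ?_⟩
    simpa [hcard] using mul_exp_neg_eight_mul_sqrt_log_le_three_mul_rothNumberNat hq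
      (mod_cast hLq) (mod_cast hqL)
end

section
/- Let q be a prime power and g ≥ 2 an integer. There exists a set S ⊆ ℙ𝔽_q^2 of size 3g with matching collinear triples (i.e., S partitions into g triples such that the only collinear triples of distinct points of S are the g triples of the partition) if and only if there exists a maximally recoverable (3g, r=3, h=3, a=1, q)-local reconstruction code. -/
/-!
Rescale the columns so that every local parity is `1`, and use one column of each local group as a
pivot to clear the others. Writing `b (i, k)` for the resulting heavy-parity vectors, the code is
maximally recoverable if and only if any `h` differences `b (i, k) - b (i, β i)`, one pivot
`b (i, β i)` being chosen in each group, are linearly independent. For `r = h = 3` the `b (i, k)`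
are the vertices of `g` triangles in `F³`, and the differences are, up to sign, the sides other than
the ones opposite to the pivots. So three sides are required to be independent exactly when they are
not the sides of a single triangle, and those sum to zero. In other words, the directions of the
sides form a set with matching collinear triples; they are distinct because, as `g ≥ 2`, two
parallel sides would form a forbidden dependent triple with a side of another triangle. Conversely,
representatives of three distinct collinear points can be rescaled to sum to zero, and are then the
sides of a triangle.
-/

section LinearAlgebra

variable {R ι V W U : Type*} [Ring R] [AddCommGroup V] [Module R V] [AddCommGroup W] [Module R W]
  [AddCommGroup U] [Module R U]

theorem linearIndepOn_iff_of_units_smul {u v : ι → V} {s : Set ι}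
    (h : ∀ x ∈ s, ∃ c : Rˣ, u x = c • v x) : LinearIndepOn R u s ↔ LinearIndepOn R v s := by
  choose c hc using h
  have huv : (fun x : s => u x) = (fun x : s => c x x.2) • fun x : s => v x :=
    funext fun x => hc x x.2
  rw [LinearIndepOn, huv, LinearIndependent.units_smul_iff, LinearIndepOn]

theorem linearIndepOn_finset_iff_card_le_finrank_span {K : Type*} [DivisionRing K] [Module K V]
    {v : ι → V} {S : Finset ι} :
    LinearIndepOn K v S ↔ S.card ≤ Module.finrank K (Submodule.span K (v '' S)) := by
  rw [LinearIndepOn, linearIndependent_iff_card_le_finrank_span, Set.finrank, Set.image_eq_range]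
  simp

theorem linearIndepOn_map_finset {κ : Type*} (p : κ ↪ ι) (v : ι → V) (S : Finset κ) :
    LinearIndepOn R v (S.map p : Finset ι) ↔ LinearIndepOn R (fun x => v (p x)) S := by
  rw [Finset.coe_map]
  exact ⟨fun h => h.comp_of_image p.injective.injOn, LinearIndepOn.image_of_comp p v⟩

/-- Block elimination: `π` detects the pivots `s`, and modulo their span the remaining vectors
`v x` become `j (d x)`, on which `π` vanishes. -/
theorem linearIndepOn_union_iff_of_sub_mem_span {v : ι → V} {d : ι → U} {s t : Set ι}
    (hst : Disjoint s t) {π : V →ₗ[R] W} {j : U →ₗ[R] V} (hj : Function.Injective j)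
    (hπj : ∀ u, π (j u) = 0) (hs : LinearIndepOn R (π ∘ v) s)
    (hd : ∀ x ∈ t, v x - j (d x) ∈ Submodule.span R (v '' s)) :
    LinearIndepOn R v (s ∪ t) ↔ LinearIndepOn R d t := by
  set P := Submodule.span R (v '' s) with hP
  have hφ : Function.Injective (P.mkQ ∘ₗ j) := by
    rw [injective_iff_map_eq_zero]
    intro u hu
    have hju : j u ∈ P := by simpa using hu
    have hker : j u ∈ LinearMap.ker π := hπj u
    have hdisj : Disjoint P (LinearMap.ker π) := by
      rw [hP, Set.image_eq_range]
      exact Submodule.range_ker_disjoint hs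
    exact hj ((Submodule.disjoint_def.1 hdisj _ hju hker).trans j.map_zero.symm)
  have hmod : Set.EqOn (P.mkQ ∘ v) ((P.mkQ ∘ₗ j) ∘ d) t := fun x hx =>
    (Submodule.Quotient.eq P).2 (hd x hx)
  rw [linearIndepOn_union_iff_quotient hst, and_iff_right (hs.of_comp π), linearIndepOn_congr hmod,
    LinearMap.linearIndepOn_iff_of_injOn _ hφ.injOn]

theorem exists_sum_smul_eq_zero_forall_ne_zero [Fintype ι] {v : ι → V}
    (hdep : ¬ LinearIndependent R v) (hindep : ∀ m, LinearIndepOn R v {m}ᶜ) :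
    ∃ c : ι → R, ∑ i, c i • v i = 0 ∧ ∀ i, c i ≠ 0 := by
  classical
  obtain ⟨c, hc, i, hi⟩ := Fintype.not_linearIndependent_iff.1 hdep
  refine ⟨c, hc, fun m hm => hi ?_⟩
  obtain rfl | him := eq_or_ne i m
  · exact hm
  have hm_indep : LinearIndepOn R v ({m}ᶜ : Finset ι) := by simpa using hindep m
  refine linearIndepOn_finset_iff.1 hm_indep c ?_ i (by simpa using him)
  rw [← hc, ← Finset.sum_compl_add_sum {m}, Finset.sum_singleton, hm, zero_smul, add_zero]

end LinearAlgebra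

section LocalGroups

variable {ι κ α : Type*}

/-- The set of all indices whose first coordinate is `i`: the `i`-th local group of columns of a
code, or the `i`-th triple of a family of points labelled by `ι × Fin 3`. -/
def localGroup [Fintype κ] (i : ι) : Finset (ι × κ) :=
  Finset.univ.map (.sectR i κ)

@[simp]
theorem mem_localGroup [Fintype κ] {i : ι} {x : ι × κ} : x ∈ localGroup i ↔ x.1 = i := by
  obtain ⟨j, k⟩ := x
  simp [localGroup, eq_comm]

@[simp]
theorem card_localGroup [Fintype κ] (i : ι) :
    (localGroup i : Finset (ι × κ)).card = Fintype.card κ := by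
  simp [localGroup]

theorem forall_ne_localGroup_iff_exists_notMem [Fintype κ] {S : Finset (ι × κ)}
    (hS : S.card = Fintype.card κ) :
    (∀ i, S ≠ localGroup i) ↔ ∃ β : ι → κ, ∀ x ∈ S, x.2 ≠ β x.1 := by
  constructor
  · intro h
    have hmissing : ∀ i, ∃ k, (i, k) ∉ S := by
      intro i
      by_contra! hall
      have hsub : localGroup i ⊆ S := by
        rintro ⟨j, k⟩ hx
        obtain rfl : j = i := mem_localGroup.1 hx
        exact hall k
      exact h i (Finset.eq_of_subset_of_card_le hsub (by simp [hS])).symm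
    choose β hβ using hmissing
    exact ⟨β, fun x hx hxβ => hβ x.1 (hxβ ▸ hx)⟩
  · rintro ⟨β, hβ⟩ i rfl
    exact hβ (i, β i) (by simp) rfl

/-- The graph of `β`: one index from each local group. -/
def transversal [Fintype ι] (β : ι → κ) : Finset (ι × κ) :=
  Finset.univ.map
    ⟨fun i => (i, β i), Function.LeftInverse.injective (g := Prod.fst) fun _ => rfl⟩

@[simp]
theorem mem_transversal [Fintype ι] {β : ι → κ} {x : ι × κ} :
    x ∈ transversal β ↔ x.2 = β x.1 := by
  obtain ⟨i, k⟩ := x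
  simp [transversal, eq_comm]

@[simp]
theorem card_transversal [Fintype ι] (β : ι → κ) : (transversal β).card = Fintype.card ι := by
  simp [transversal]

theorem disjoint_transversal_iff [Fintype ι] {β : ι → κ} {S : Finset (ι × κ)} :
    Disjoint (transversal β) S ↔ ∀ x ∈ S, x.2 ≠ β x.1 := by
  simp only [Finset.disjoint_right, mem_transversal, ne_eq]

theorem card_eq_and_forall_nonempty_iff_exists_transversal_union [Fintype ι] [DecidableEq ι]
    [DecidableEq κ] {E : Finset (ι × κ)} {h : ℕ} :
    (E.card = Fintype.card ι + h ∧ ∀ i, (E.filter (fun x => x.1 = i)).Nonempty) ↔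
      ∃ (β : ι → κ) (S : Finset (ι × κ)), S.card = h ∧ (∀ x ∈ S, x.2 ≠ β x.1) ∧
        E = transversal β ∪ S := by
  constructor
  · rintro ⟨hE, hmeet⟩
    have hmem : ∀ i, ∃ k, (i, k) ∈ E := by
      intro i
      obtain ⟨x, hx⟩ := hmeet i
      obtain ⟨hxE, rfl⟩ := Finset.mem_filter.1 hx
      exact ⟨x.2, hxE⟩
    choose β hβ using hmem
    have hsub : transversal β ⊆ E := by
      rintro ⟨i, k⟩ hx
      obtain rfl : k = β i := mem_transversal.1 hx
      exact hβ i
    refine ⟨β, E \ transversal β, ?_, by simp, (Finset.union_sdiff_of_subset hsub).symm⟩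
    rw [Finset.card_sdiff_of_subset hsub, hE, card_transversal, Nat.add_sub_cancel_left]
  · rintro ⟨β, S, rfl, hS, rfl⟩
    refine ⟨?_, fun i => ⟨(i, β i), by simp⟩⟩
    rw [Finset.card_union_of_disjoint (disjoint_transversal_iff.2 hS), card_transversal]

theorem exists_embedding_eq_image_map_localGroup [Fintype ι] [Fintype κ] [DecidableEq α]
    {T : Finset (Finset α)} (hT : T.card = Fintype.card ι)
    (hcard : ∀ t ∈ T, t.card = Fintype.card κ) (hdisj : (T : Set (Finset α)).PairwiseDisjoint id) :
    ∃ p : ι × κ ↪ α, T = Finset.univ.image fun i => (localGroup i).map p := by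
  let e : ι ≃ T := Fintype.equivOfCardEq (by simp [hT])
  let f (i : ι) : κ ≃ (e i).1 := Fintype.equivOfCardEq (by simp [hcard _ (e i).2])
  have hinj : Function.Injective fun x : ι × κ => (f x.1 x.2 : α) := by
    rintro ⟨i, k⟩ ⟨j, l⟩ hij
    dsimp only at hij
    obtain rfl : i = j := by
      refine e.injective (Subtype.ext (hdisj.elim_finset (e i).2 (e j).2 _ (f i k).2 ?_))
      rw [hij]
      exact (f j l).2
    rw [(f i).injective (Subtype.ext hij)]
  have hgroup (i : ι) : (localGroup i).map ⟨_, hinj⟩ = (e i).1 := by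
    refine Finset.eq_of_subset_of_card_le (fun a ha => ?_) (by simp [hcard _ (e i).2])
    obtain ⟨⟨j, k⟩, hx, rfl⟩ := Finset.mem_map.1 ha
    obtain rfl : j = i := mem_localGroup.1 hx
    exact (f j k).2
  refine ⟨⟨_, hinj⟩, Finset.ext fun t => ?_⟩
  simp only [hgroup, Finset.mem_image, Finset.mem_univ, true_and]
  exact ⟨fun ht => ⟨e.symm ⟨t, ht⟩, by simp⟩, by rintro ⟨i, rfl⟩; exact (e i).2⟩

theorem iUnion_map_localGroup [Fintype ι] [Fintype κ] [DecidableEq α] (p : ι × κ ↪ α) :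
    ⋃ t ∈ Finset.univ.image fun i => (localGroup i).map p, (t : Set α) =
      (Finset.univ.map p : Finset α) := by
  ext a
  simp

theorem pairwiseDisjoint_image_map_localGroup [Fintype ι] [Fintype κ] [DecidableEq α]
    (p : ι × κ ↪ α) :
    ((Finset.univ.image fun i => (localGroup i).map p : Finset (Finset α)) :
      Set (Finset α)).PairwiseDisjoint id := by
  simp only [Finset.coe_image, Finset.coe_univ, Set.image_univ]
  rintro _ ⟨i, rfl⟩ _ ⟨j, rfl⟩ hij
  rw [Function.onFun, id, id, Finset.disjoint_map, Finset.disjoint_left]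
  intro x hi hj
  rw [mem_localGroup] at hi hj
  exact hij (by rw [← hi, ← hj])

theorem partition_iff_exists_labelling [Fintype ι] [Fintype κ] [Nonempty κ] [DecidableEq α]
    {A : Finset α} {T : Finset (Finset α)} :
    (A.card = Fintype.card κ * Fintype.card ι ∧ (∀ t ∈ T, t.card = Fintype.card κ) ∧
        (T : Set (Finset α)).PairwiseDisjoint id ∧ (A : Set α) = ⋃ t ∈ T, (t : Set α)) ↔
      ∃ p : ι × κ ↪ α, A = Finset.univ.map p ∧
        T = Finset.univ.image fun i => (localGroup i).map p := by
  constructor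
  · rintro ⟨hA, hcard, hdisj, hunion⟩
    have hAT : A = T.biUnion id := Finset.coe_injective (by simpa using hunion)
    have hT : T.card = Fintype.card ι := by
      rw [hAT, Finset.card_biUnion hdisj, Finset.sum_const_nat (by simpa using hcard),
        mul_comm] at hA
      exact Nat.eq_of_mul_eq_mul_left Fintype.card_pos hA
    obtain ⟨p, rfl⟩ := exists_embedding_eq_image_map_localGroup hT hcard hdisj
    exact ⟨p, Finset.coe_injective (hunion.trans (iUnion_map_localGroup p)), rfl⟩
  · rintro ⟨p, rfl, rfl⟩
    exact ⟨by simp [mul_comm], by simp, pairwiseDisjoint_image_map_localGroup p,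
      (iUnion_map_localGroup p).symm⟩

variable {R V : Type*} [Ring R] [AddCommGroup V] [Module R V] {d : ι × κ → V}

theorem linearIndepOn_localGroup_iff [Fintype κ] {i : ι} :
    LinearIndepOn R d (localGroup i : Finset (ι × κ)) ↔ LinearIndependent R fun k => d (i, k) := by
  rw [localGroup, linearIndepOn_map_finset, Finset.coe_univ, linearIndepOn_univ_iff]
  rfl

theorem linearIndepOn_transversal_iff [Fintype ι] {β : ι → κ} :
    LinearIndepOn R d (transversal β) ↔ LinearIndependent R fun i => d (i, β i) := by
  rw [transversal, linearIndepOn_map_finset, Finset.coe_univ, linearIndepOn_univ_iff]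
  rfl

end LocalGroups

section MaximallyRecoverable

variable {F : Type} [Field F] {g r h : ℕ}

theorem linearIndependent_minors_one_iff {A : Matrix (Fin 1) (Fin r) F} :
    (∀ S : Finset (Fin r), S.card = 1 →
      LinearIndependent F (fun c : {x // x ∈ S} => fun j : Fin 1 => A j c.1)) ↔
    ∀ k, A 0 k ≠ 0 := by
  have hsingleton (k : Fin r) : LinearIndepOn F A.col {k} ↔ A 0 k ≠ 0 := by
    simp [linearIndepOn_singleton_iff, funext_iff]
  constructor
  · intro hA k
    have hk : LinearIndepOn F A.col ({k} : Finset (Fin r)) := hA {k} (Finset.card_singleton k)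
    exact (hsingleton k).1 (by simpa only [Finset.coe_singleton] using hk)
  · intro hA S hS
    obtain ⟨k, rfl⟩ := Finset.card_eq_one.1 hS
    have hk : LinearIndepOn F A.col ({k} : Finset (Fin r)) := by
      simpa only [Finset.coe_singleton] using (hsingleton k).2 (hA k)
    exact hk

/-- The heavy-parity part of the columns of a parity check matrix with one local parity per group,
after each column has been rescaled so that its local parity is `1`. -/
def normalizedHeavyColumn (A : Fin g → Matrix (Fin 1) (Fin r) F)
    (B : Fin g → Matrix (Fin h) (Fin r) F) (c : Fin g × Fin r) : Fin h → F :=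
  (A c.1 0 c.2)⁻¹ • (B c.1).col c.2

theorem inv_mul_lrcParityCheck_inl {A : Fin g → Matrix (Fin 1) (Fin r) F}
    (B : Fin g → Matrix (Fin h) (Fin r) F) {c : Fin g × Fin r} (hA : A c.1 0 c.2 ≠ 0)
    (ρ : Fin g × Fin 1) :
    (A c.1 0 c.2)⁻¹ * lrcParityCheck F g r 1 h A B (Sum.inl ρ) c =
      (Pi.single (c.1, 0) 1 : Fin g × Fin 1 → F) ρ := by
  obtain ⟨i, j⟩ := ρ
  obtain rfl : j = 0 := Subsingleton.elim _ _
  by_cases hi : i = c.1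
  · subst hi
    simp [lrcParityCheck, hA]
  · simp [lrcParityCheck, hi]

theorem linearIndepOn_lrcParityCheck_transversal_union_iff
    {A : Fin g → Matrix (Fin 1) (Fin r) F} (B : Fin g → Matrix (Fin h) (Fin r) F)
    (hA : ∀ i k, A i 0 k ≠ 0) {β : Fin g → Fin r} {S : Finset (Fin g × Fin r)}
    (hS : ∀ x ∈ S, x.2 ≠ β x.1) :
    LinearIndepOn F (lrcParityCheck F g r 1 h A B).col (transversal β ∪ S : Finset _) ↔
      LinearIndepOn F (fun c => normalizedHeavyColumn A B c -
        normalizedHeavyColumn A B (c.1, β c.1)) S := by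
  let v (c : Fin g × Fin r) := (A c.1 0 c.2)⁻¹ • (lrcParityCheck F g r 1 h A B).col c
  have hv_inl (c : Fin g × Fin r) (ρ) :
      v c (Sum.inl ρ) = (Pi.single (c.1, 0) 1 : Fin g × Fin 1 → F) ρ :=
    inv_mul_lrcParityCheck_inl B (hA c.1 c.2) ρ
  have hv_inr (c : Fin g × Fin r) (l) : v c (Sum.inr l) = normalizedHeavyColumn A B c l := rfl
  have hscale : ∀ c ∈ (transversal β ∪ S : Finset _), ∃ a : Fˣ,
      (lrcParityCheck F g r 1 h A B).col c = a • v c := fun c _ =>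
    ⟨Units.mk0 _ (hA c.1 c.2), by simp [v, Units.smul_def, smul_smul, hA]⟩
  rw [linearIndepOn_iff_of_units_smul hscale, Finset.coe_union]
  let e := (LinearEquiv.sumArrowLequivProdArrow (Fin g × Fin 1) (Fin h) F F).symm
  refine linearIndepOn_union_iff_of_sub_mem_span
    (Finset.disjoint_coe.2 (disjoint_transversal_iff.2 hS))
    (π := LinearMap.funLeft F F Sum.inl) (j := e.toLinearMap ∘ₗ LinearMap.inr F _ _)
    (e.injective.comp LinearMap.inr_injective) (fun _ => rfl) ?_ ?_
  · have hpivots : (fun i => (LinearMap.funLeft F F Sum.inl ∘ v) (i, β i)) =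
        (fun ρ : Fin g × Fin 1 => Pi.single ρ (1 : F)) ∘ fun i => (i, 0) :=
      funext fun i => funext fun ρ => hv_inl (i, β i) ρ
    rw [linearIndepOn_transversal_iff, hpivots]
    exact (Pi.linearIndependent_single_one _ F).comp _ (Prod.mk_left_injective 0)
  · intro c _
    have hpivot : v (c.1, β c.1) ∈ Submodule.span F (v '' transversal β) :=
      Submodule.subset_span ⟨_, by simp, rfl⟩
    convert hpivot using 1
    ext (ρ | l)
    · simp [e, hv_inl]
    · simp [e, hv_inr]

theorem isMRLRC_one_iff {A : Fin g → Matrix (Fin 1) (Fin r) F}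
    {B : Fin g → Matrix (Fin h) (Fin r) F} :
    IsMRLRC F g r 1 h A B ↔ (∀ i k, A i 0 k ≠ 0) ∧
      ∀ (β : Fin g → Fin r) (S : Finset (Fin g × Fin r)), S.card = h →
        (∀ x ∈ S, x.2 ≠ β x.1) →
        LinearIndepOn F (fun c => normalizedHeavyColumn A B c -
          normalizedHeavyColumn A B (c.1, β c.1)) S := by
  rw [IsMRLRC, forall_congr' fun i => linearIndependent_minors_one_iff]
  refine and_congr_right fun hA => ⟨fun hE β S hcard hS => ?_, fun hS E hEcard hmeet => ?_⟩
  · obtain ⟨hEcard, hmeet⟩ :=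
      card_eq_and_forall_nonempty_iff_exists_transversal_union.2 ⟨β, S, hcard, hS, rfl⟩
    exact (linearIndepOn_lrcParityCheck_transversal_union_iff B hA hS).1
      (hE _ (by simpa using hEcard) fun i => Finset.card_pos.2 (hmeet i))
  · obtain ⟨β, S, hcard, hSβ, rfl⟩ :=
      card_eq_and_forall_nonempty_iff_exists_transversal_union.1
        ⟨by simpa using hEcard, fun i => Finset.card_pos.1 (hmeet i)⟩
    exact (linearIndepOn_lrcParityCheck_transversal_union_iff B hA hSβ).2 (hS β S hcard hSβ)

theorem exists_isMRLRC_one_iff :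
    (∃ (A : Fin g → Matrix (Fin 1) (Fin r) F) (B : Fin g → Matrix (Fin h) (Fin r) F),
        IsMRLRC F g r 1 h A B) ↔
      ∃ b : Fin g × Fin r → Fin h → F,
        ∀ (β : Fin g → Fin r) (S : Finset (Fin g × Fin r)), S.card = h →
          (∀ x ∈ S, x.2 ≠ β x.1) → LinearIndepOn F (fun c => b c - b (c.1, β c.1)) S := by
  constructor
  · rintro ⟨A, B, hAB⟩
    exact ⟨normalizedHeavyColumn A B, (isMRLRC_one_iff.1 hAB).2⟩
  · rintro ⟨b, hb⟩
    let A : Fin g → Matrix (Fin 1) (Fin r) F := fun _ => Matrix.of fun _ _ => 1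
    let B : Fin g → Matrix (Fin h) (Fin r) F := fun i => Matrix.of fun l k => b (i, k) l
    have hAB : normalizedHeavyColumn A B = b := by
      ext c l
      simp [normalizedHeavyColumn, A, B]
    exact ⟨A, B, isMRLRC_one_iff.2 ⟨fun _ _ => one_ne_zero, by rwa [hAB]⟩⟩

end MaximallyRecoverable

section Triangles

variable {R ι V : Type*} [Ring R] [AddCommGroup V] [Module R V]

/-- The side vector opposite to the vertex `b k` of the triangle with vertices `b 0`, `b 1`, `b 2`,
the sides being oriented cyclically. -/
def oppositeSide (b : Fin 3 → V) (k : Fin 3) : V := b (k + 2) - b (k + 1)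

theorem exists_oppositeSide_eq_iff {d : Fin 3 → V} :
    (∃ b, oppositeSide b = d) ↔ ∑ k, d k = 0 := by
  constructor
  · rintro ⟨b, rfl⟩
    have hshift (m : Fin 3) : ∑ k, b (k + m) = ∑ k, b k := Equiv.sum_comp (Equiv.addRight m) b
    simp only [oppositeSide, Finset.sum_sub_distrib, hshift, sub_self]
  · intro hd
    have h0 : d 0 = -d 1 - d 2 := by
      rw [Fin.sum_univ_three, add_assoc] at hd
      rw [eq_neg_of_add_eq_zero_left hd, neg_add']
    refine ⟨![0, d 2, -d 1], funext fun k => ?_⟩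
    fin_cases k <;> simp [oppositeSide, h0]

theorem exists_sub_eq_units_smul_oppositeSide (b : Fin 3 → V) {k l : Fin 3} (hkl : k ≠ l) :
    ∃ s : Rˣ, b k - b l = s • oppositeSide b (Equiv.swap (l + 1) (l + 2) k) := by
  obtain rfl | rfl : k = l + 1 ∨ k = l + 2 := by grind
  · refine ⟨1, ?_⟩
    rw [Equiv.swap_apply_left, oppositeSide]
    simp [add_assoc]
  · refine ⟨-1, ?_⟩
    rw [Equiv.swap_apply_right, oppositeSide]
    simp [add_assoc]

/-- The vector form of having matching collinear triples: the only linearly dependent three-element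
subfamilies of `d` are the local groups. Subfamilies are sets of indices, so `d` is not required to
be injective. -/
def DependentTriplesAreGroups (R : Type*) {ι V : Type*} [Ring R] [AddCommGroup V] [Module R V]
    (d : ι × Fin 3 → V) : Prop :=
  ∀ S : Finset (ι × Fin 3), S.card = 3 → (¬ LinearIndepOn R d S ↔ ∃ i, S = localGroup i)

theorem dependentTriplesAreGroups_iff_of_units_smul {d e : ι × Fin 3 → V}
    (h : ∀ x, ∃ c : Rˣ, d x = c • e x) :
    DependentTriplesAreGroups R d ↔ DependentTriplesAreGroups R e := by
  simp only [DependentTriplesAreGroups, linearIndepOn_iff_of_units_smul fun x _ => h x]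

theorem dependentTriplesAreGroups_iff_of_sum_eq_zero [Nontrivial R] {d : ι × Fin 3 → V}
    (hd : ∀ i, ∑ k, d (i, k) = 0) :
    DependentTriplesAreGroups R d ↔ ∀ (β : ι → Fin 3) (S : Finset (ι × Fin 3)), S.card = 3 →
      (∀ x ∈ S, x.2 ≠ β x.1) → LinearIndepOn R d S := by
  constructor
  · intro h β S hcard hβ
    by_contra hdep
    obtain ⟨i, rfl⟩ := (h S hcard).1 hdep
    exact hβ (i, β i) (by simp) rfl
  · intro h S hcard
    constructor
    · contrapose!
      intro hS
      obtain ⟨β, hβ⟩ := (forall_ne_localGroup_iff_exists_notMem (by simpa using hcard)).1 hS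
      exact h β S hcard hβ
    · rintro ⟨i, rfl⟩
      rw [linearIndepOn_localGroup_iff]
      exact Fintype.not_linearIndependent_iff.2 ⟨1, by simpa using hd i, 0, one_ne_zero⟩

theorem forall_linearIndepOn_sub_iff_dependentTriplesAreGroups [Nontrivial R] (b : ι × Fin 3 → V) :
    (∀ (β : ι → Fin 3) (S : Finset (ι × Fin 3)), S.card = 3 → (∀ x ∈ S, x.2 ≠ β x.1) →
        LinearIndepOn R (fun c => b c - b (c.1, β c.1)) S) ↔
      DependentTriplesAreGroups R fun c => oppositeSide (fun k => b (c.1, k)) c.2 := by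
  rw [dependentTriplesAreGroups_iff_of_sum_eq_zero fun i =>
    exists_oppositeSide_eq_iff.1 ⟨fun k => b (i, k), rfl⟩]
  refine forall_congr' fun β => ?_
  let τ : Equiv.Perm (ι × Fin 3) :=
    Equiv.prodShear (Equiv.refl ι) fun i => Equiv.swap (β i + 1) (β i + 2)
  have hτ : ∀ x, (τ x).2 = β (τ x).1 ↔ x.2 = β x.1 := by
    rintro ⟨i, k⟩
    have hswap : ∀ k l : Fin 3, Equiv.swap (l + 1) (l + 2) k = l ↔ k = l := by decide
    exact hswap k (β i)
  have hsides (S : Finset (ι × Fin 3)) (hS : ∀ x ∈ S, x.2 ≠ β x.1) :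
      LinearIndepOn R (fun c => b c - b (c.1, β c.1)) S ↔
        LinearIndepOn R (fun c : ι × Fin 3 => oppositeSide (fun k => b (c.1, k)) c.2)
          (S.map τ.toEmbedding : Finset _) := by
    rw [linearIndepOn_map_finset]
    exact linearIndepOn_iff_of_units_smul fun x hx =>
      exists_sub_eq_units_smul_oppositeSide (fun k => b (x.1, k)) (hS x hx)
  refine (Equiv.finsetCongr τ).forall_congr fun S => ?_
  simp only [Equiv.finsetCongr_apply, Finset.card_map, Finset.forall_mem_map,
    Equiv.coe_toEmbedding, ne_eq, hτ]
  exact forall₂_congr fun _ hS => hsides S hS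

theorem exists_isMRLRC_three_iff {F : Type} [Field F] {g : ℕ} :
    (∃ (A : Fin g → Matrix (Fin 1) (Fin 3) F) (B : Fin g → Matrix (Fin 3) (Fin 3) F),
        IsMRLRC F g 3 1 3 A B) ↔
      ∃ d : Fin g × Fin 3 → Fin 3 → F,
        (∀ i, ∑ k, d (i, k) = 0) ∧ DependentTriplesAreGroups F d := by
  simp only [exists_isMRLRC_one_iff, forall_linearIndepOn_sub_iff_dependentTriplesAreGroups]
  constructor
  · rintro ⟨b, hb⟩
    exact ⟨_, fun i => exists_oppositeSide_eq_iff.1 ⟨fun k => b (i, k), rfl⟩, hb⟩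
  · rintro ⟨d, hsum, hd⟩
    choose b hb using fun i => exists_oppositeSide_eq_iff.2 (hsum i)
    refine ⟨fun c => b c.1 c.2, ?_⟩
    simpa only [hb] using hd

end Triangles

section Projective

open scoped LinearAlgebra.Projectivization

theorem projCollinear_iff_not_linearIndepOn_rep {F : Type} [Field F]
    [DecidableEq (ℙ F (Fin 3 → F))] {p₁ p₂ p₃ : ℙ F (Fin 3 → F)}
    (h₁₂ : p₁ ≠ p₂) (h₁₃ : p₁ ≠ p₃) (h₂₃ : p₂ ≠ p₃) :
    ProjCollinear F p₁ p₂ p₃ ↔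
      ¬ LinearIndepOn F Projectivization.rep (({p₁, p₂, p₃} : Finset (ℙ F (Fin 3 → F))) :
        Set (ℙ F (Fin 3 → F))) := by
  rw [linearIndepOn_finset_iff_card_le_finrank_span,
    Finset.card_eq_three.2 ⟨_, _, _, h₁₂, h₁₃, h₂₃, rfl⟩, not_le, Nat.lt_succ_iff]
  have hspan (W : Submodule F (Fin 3 → F)) :
      (p₁.submodule ≤ W ∧ p₂.submodule ≤ W ∧ p₃.submodule ≤ W) ↔
        Submodule.span F (Projectivization.rep '' (({p₁, p₂, p₃} : Finset (ℙ F (Fin 3 → F))) :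
          Set (ℙ F (Fin 3 → F)))) ≤ W := by
    simp [Projectivization.submodule_eq, Submodule.span_le, Set.image_insert_eq,
      Set.insert_subset_iff]
  simp only [ProjCollinear, hspan]
  exact ⟨fun ⟨W, hW, hle⟩ => (Submodule.finrank_mono hle).trans hW, fun hle => ⟨_, hle, le_rfl⟩⟩

theorem forall_projCollinear_iff {F : Type} [Field F] {A : Finset (ℙ F (Fin 3 → F))}
    {T : Finset (Finset (ℙ F (Fin 3 → F)))} :
    (∀ p₁ ∈ A, ∀ p₂ ∈ A, ∀ p₃ ∈ A, p₁ ≠ p₂ → p₁ ≠ p₃ → p₂ ≠ p₃ →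
        (ProjCollinear F p₁ p₂ p₃ ↔ ∃ t ∈ T, (t : Set (ℙ F (Fin 3 → F))) = {p₁, p₂, p₃})) ↔
      ∀ S ⊆ A, S.card = 3 →
        (¬ LinearIndepOn F Projectivization.rep (S : Set (ℙ F (Fin 3 → F))) ↔ S ∈ T) := by
  classical
  have hmem (p₁ p₂ p₃) : (∃ t ∈ T, (t : Set (ℙ F (Fin 3 → F))) = {p₁, p₂, p₃}) ↔
      ({p₁, p₂, p₃} : Finset (ℙ F (Fin 3 → F))) ∈ T := by
    have hcoe (t : Finset (ℙ F (Fin 3 → F))) :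
        (t : Set (ℙ F (Fin 3 → F))) = {p₁, p₂, p₃} ↔ t = {p₁, p₂, p₃} := by
      simp [← Finset.coe_inj]
    simp only [hcoe, exists_eq_right]
  simp only [hmem]
  constructor
  · intro h S hSA hS
    obtain ⟨p₁, p₂, p₃, h₁₂, h₁₃, h₂₃, rfl⟩ := Finset.card_eq_three.1 hS
    rw [← projCollinear_iff_not_linearIndepOn_rep h₁₂ h₁₃ h₂₃]
    simp only [Finset.insert_subset_iff, Finset.singleton_subset_iff] at hSA
    exact h _ hSA.1 _ hSA.2.1 _ hSA.2.2 h₁₂ h₁₃ h₂₃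
  · intro h p₁ h₁ p₂ h₂ p₃ h₃ h₁₂ h₁₃ h₂₃
    rw [projCollinear_iff_not_linearIndepOn_rep h₁₂ h₁₃ h₂₃]
    exact h _ (by simp [Finset.insert_subset_iff, *])
      (Finset.card_eq_three.2 ⟨_, _, _, h₁₂, h₁₃, h₂₃, rfl⟩)

theorem exists_hasMatchingCollinearTriples_iff {F : Type} [Field F] {g : ℕ} :
    (∃ A : Finset (ℙ F (Fin 3 → F)), A.card = 3 * g ∧ HasMatchingCollinearTriples F A) ↔
      ∃ p : Fin g × Fin 3 ↪ ℙ F (Fin 3 → F),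
        DependentTriplesAreGroups F fun x => (p x).rep := by
  classical
  have hlabel (p : Fin g × Fin 3 ↪ ℙ F (Fin 3 → F)) :
      (∀ S ⊆ Finset.univ.map p, S.card = 3 →
        (¬ LinearIndepOn F Projectivization.rep (S : Set (ℙ F (Fin 3 → F))) ↔
          S ∈ Finset.univ.image fun i => (localGroup i).map p)) ↔
      DependentTriplesAreGroups F fun x => (p x).rep := by
    simp only [DependentTriplesAreGroups, ← linearIndepOn_map_finset p Projectivization.rep,
      Finset.subset_map_iff, Finset.subset_univ, true_and, forall_exists_index,
      Finset.mem_image, Finset.mem_univ]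
    refine ⟨fun h S hS => ?_, ?_⟩
    · simpa [eq_comm] using h _ S rfl (by simpa using hS)
    · rintro h _ S rfl hS
      simpa [eq_comm] using h S (by simpa using hS)
  simp only [HasMatchingCollinearTriples, forall_projCollinear_iff, ← hlabel]
  constructor
  · rintro ⟨A, hA, T, hT, hdisj, hunion, h⟩
    obtain ⟨p, rfl, rfl⟩ := (partition_iff_exists_labelling (ι := Fin g) (κ := Fin 3)).1
      ⟨by simpa using hA, by simpa using hT, hdisj, hunion⟩
    exact ⟨p, h⟩
  · rintro ⟨p, h⟩
    obtain ⟨hA, hT, hdisj, hunion⟩ := partition_iff_exists_labelling.2 ⟨p, rfl, rfl⟩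
    exact ⟨_, by simpa using hA, _, hT, hdisj, hunion, h⟩

variable {K V : Type*} [DivisionRing K] [AddCommGroup V] [Module K V]

theorem linearIndepOn_rep_pair {ι : Type*} {p : ι → ℙ K V} (k l : ι) (h : p k ≠ p l) :
    LinearIndepOn K (fun i => (p i).rep) {k, l} := by
  rw [linearIndepOn_pair_iff _ (fun hkl => h (congrArg p hkl)) (p k).rep_nonzero]
  intro c hc
  refine h ?_
  rw [← (p k).mk_rep, ← (p l).mk_rep, eq_comm]
  exact (Projectivization.mk_eq_mk_iff' K _ _ _ _).2 ⟨c, hc⟩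

theorem exists_units_smul_rep_sum_eq_zero {p : Fin 3 → ℙ K V} (hp : Function.Injective p)
    (hdep : ¬ LinearIndependent K fun k => (p k).rep) :
    ∃ c : Fin 3 → Kˣ, ∑ k, c k • (p k).rep = 0 := by
  have hindep (m : Fin 3) : LinearIndepOn K (fun k => (p k).rep) {m}ᶜ := by
    have hm : ({m}ᶜ : Set (Fin 3)) = {m + 1, m + 2} := by
      ext k
      simp
      grind
    rw [hm]
    exact linearIndepOn_rep_pair _ _ (hp.ne (by simp))
  obtain ⟨c, hsum, hc⟩ := exists_sum_smul_eq_zero_forall_ne_zero hdep hindep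
  exact ⟨fun k => Units.mk0 (c k) (hc k), by simpa [Units.smul_def] using hsum⟩

theorem DependentTriplesAreGroups.linearIndepOn_pair {ι : Type*} [Nontrivial ι]
    {d : ι × Fin 3 → V} (hd : DependentTriplesAreGroups K d) {x y : ι × Fin 3} (hxy : x ≠ y) :
    LinearIndepOn K d {x, y} := by
  classical
  obtain ⟨j, hj⟩ := exists_ne x.1
  obtain ⟨k, hk⟩ := exists_ne y.2
  have hcard : ({x, y, (j, k)} : Finset (ι × Fin 3)).card = 3 :=
    Finset.card_eq_three.2 ⟨x, y, (j, k), hxy, by grind, by grind, rfl⟩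
  have hindep : LinearIndepOn K d ({x, y, (j, k)} : Finset (ι × Fin 3)) := by
    by_contra hdep
    obtain ⟨i, hi⟩ := (hd _ hcard).1 hdep
    have hx : x ∈ localGroup i := hi ▸ by simp
    have hz : (j, k) ∈ localGroup i := hi ▸ by simp
    exact hj ((mem_localGroup.1 hz).trans (mem_localGroup.1 hx).symm)
  exact hindep.mono (by simp [Set.insert_subset_iff])

theorem exists_labelling_iff_exists_sum_eq_zero {ι : Type*} [Nontrivial ι] :
    (∃ p : ι × Fin 3 ↪ ℙ K V, DependentTriplesAreGroups K fun x => (p x).rep) ↔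
      ∃ d : ι × Fin 3 → V, (∀ i, ∑ k, d (i, k) = 0) ∧ DependentTriplesAreGroups K d := by
  constructor
  · rintro ⟨p, hp⟩
    have hgroup (i : ι) : ¬ LinearIndependent K fun k => (p (i, k)).rep := by
      rw [← linearIndepOn_localGroup_iff (d := fun x => (p x).rep)]
      exact (hp _ (by simp)).2 ⟨i, rfl⟩
    choose c hc using fun i =>
      exists_units_smul_rep_sum_eq_zero (p := fun k => p (i, k)) (fun k l h => by simpa using h)
        (hgroup i)
    exact ⟨fun x => c x.1 x.2 • (p x).rep, hc,
      (dependentTriplesAreGroups_iff_of_units_smul fun x => ⟨c x.1 x.2, rfl⟩).2 hp⟩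
  · rintro ⟨d, -, hd⟩
    have hd₀ (x) : d x ≠ 0 := by
      obtain ⟨y, hy⟩ := exists_ne x
      exact (hd.linearIndepOn_pair hy.symm).ne_zero (Set.mem_insert _ _)
    have hinj : Function.Injective fun x => Projectivization.mk K (d x) (hd₀ x) := by
      intro x y hxy
      by_contra hne
      obtain ⟨a, ha⟩ := (Projectivization.mk_eq_mk_iff' K _ _ _ _).1 hxy
      exact (linearIndepOn_pair_iff _ (Ne.symm hne) (hd₀ y)).1 (hd.linearIndepOn_pair (Ne.symm hne))
        a ha
    refine ⟨⟨_, hinj⟩, (dependentTriplesAreGroups_iff_of_units_smul fun x => ?_).2 hd⟩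
    obtain ⟨a, ha⟩ := Projectivization.exists_smul_eq_mk_rep K (d x) (hd₀ x)
    exact ⟨a, ha.symm⟩

end Projective

theorem matchingCollinearTriples_iff_existsMRLRC_general (F : Type) [Field F] {g : ℕ}
    (hg : 2 ≤ g) :
    (∃ A : Finset (Projectivization F (Fin 3 → F)),
        A.card = 3 * g ∧ HasMatchingCollinearTriples F A) ↔
      ∃ (A : Fin g → Matrix (Fin 1) (Fin 3) F) (B : Fin g → Matrix (Fin 3) (Fin 3) F),
        IsMRLRC F g 3 1 3 A B := by
  have : Nontrivial (Fin g) := Fin.nontrivial_iff_two_le.2 hg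
  rw [exists_hasMatchingCollinearTriples_iff, exists_labelling_iff_exists_sum_eq_zero,
    exists_isMRLRC_three_iff]

/-- **Lemma 6.3.** For `g ≥ 2` and a prime power `q`, there is a set of `3g` points of the
projective plane over `F_q` with matching collinear triples if and only if there is a
maximally recoverable `(3g, r = 3, h = 3, a = 1, q)`-local reconstruction code. -/
theorem matchingCollinearTriples_iff_existsMRLRC
    (g q : ℕ) (hg : 2 ≤ g) (hq : IsPrimePow q) :
    (∃ (F : Type) (_ : Field F) (_ : Fintype F),
        Fintype.card F = q ∧
          ∃ A : Finset (Projectivization F (Fin 3 → F)),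
            A.card = 3 * g ∧ HasMatchingCollinearTriples F A) ↔
      ExistsMRLRC g 3 3 1 q := by
  simp only [ExistsMRLRC, matchingCollinearTriples_iff_existsMRLRC_general _ hg]
end

section
/- There exists an absolute constant C > 0 such that for all positive integers a, b with n = a·b, there exist integers A ≥ a and B ≥ b such that A·B + 1 is a power of two and A·B ≤ n · exp(C·√(log n)). -/
/-!
For `q = m ^ s` the number `q ^ 2 ^ j - 1` is the product of `q - 1` and the factors
`q ^ 2 ^ i + 1` with `i < j`. Distributing these factors between `A` and `B` according to the
binary digits of `t < 2 ^ j` gives `A ≥ q ^ t` and `B ≥ q ^ (2 ^ j - 1 - t)`. Given `a ≤ m ^ x`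
and `b ≤ m ^ y`, one needs `s * t ≥ x` and `s * (2 ^ j - 1 - t) ≥ y`, and such a `t` exists once
`2 ^ j * s ≥ x + y + 2 * s`. The least such `s` for a given `j` makes the total exponent
`2 ^ j * s` exceed `x + y` by only `O(s + 2 ^ j)`; choosing `2 ^ j`, and hence `s`, of order
`√(x + y)` gives an excess of order `√(log n)`, where `n = a * b`.
-/

open Finset Real

theorem exists_subset_range_sum_two_pow_eq {j t : ℕ} (ht : t < 2 ^ j) :
    ∃ S ⊆ range j, ∑ i ∈ S, 2 ^ i = t := by
  refine ⟨t.bitIndices.toFinset, fun i hi ↦ ?_, sum_toFinset_bitIndices_two_pow t⟩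
  have hit : 2 ^ i ≤ t := Nat.two_pow_le_of_mem_bitIndices (List.mem_toFinset.mp hi)
  exact mem_range.mpr ((Nat.pow_lt_pow_iff_right one_lt_two).mp (hit.trans_lt ht))

theorem pow_sum_le_prod_pow_add_one {ι R : Type*} [CommSemiring R] [PartialOrder R]
    [IsOrderedRing R] {q : R} (hq : 0 ≤ q) (S : Finset ι) (f : ι → ℕ) :
    q ^ ∑ i ∈ S, f i ≤ ∏ i ∈ S, (q ^ f i + 1) := by
  rw [← prod_pow_eq_pow_sum]
  exact prod_le_prod (fun i _ ↦ pow_nonneg hq _) fun i _ ↦ le_add_of_nonneg_right zero_le_one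

theorem exists_mul_add_one_eq_pow_two_pow {q j t v : ℕ} (hq : 1 < q) (htv : t + v + 1 = 2 ^ j) :
    ∃ A B, q ^ t ≤ A ∧ q ^ v ≤ B ∧ A * B + 1 = q ^ 2 ^ j := by
  obtain ⟨S, hS, rfl⟩ := exists_subset_range_sum_two_pow_eq (show t < 2 ^ j by lia)
  have hv : v = ∑ i ∈ range j \ S, 2 ^ i := by
    have hsplit := sum_sdiff hS (f := fun i ↦ 2 ^ i)
    have hgeom : ∑ i ∈ range j, 2 ^ i + 1 = 2 ^ j := by simpa using geom_sum_mul_add (1 : ℕ) j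
    lia
  refine ⟨∏ i ∈ S, (q ^ 2 ^ i + 1), (∏ i ∈ range j \ S, (q ^ 2 ^ i + 1)) * (q - 1),
    pow_sum_le_prod_pow_add_one q.zero_le S _, ?_, ?_⟩
  · rw [hv]
    exact (pow_sum_le_prod_pow_add_one q.zero_le _ _).trans (Nat.le_mul_of_pos_right _ (by lia))
  · rw [mul_left_comm, ← mul_assoc, prod_sdiff hS]
    have hfactor := pow_two_pow_sub_pow_two_pow (x := (q : ℤ)) (y := 1) j
    zify [hq.le]
    simp only [one_pow] at hfactor
    rw [← hfactor, sub_add_cancel]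

theorem exists_ge_mul_add_one_eq_pow {m a b x y j s : ℕ} (hm : 1 < m) (hs : 0 < s)
    (ha : a ≤ m ^ x) (hb : b ≤ m ^ y) (hj : x + y + 2 * s ≤ 2 ^ j * s) :
    ∃ A B, a ≤ A ∧ b ≤ B ∧ A * B + 1 = m ^ (2 ^ j * s) := by
  set t := x / s + 1
  have hxt : x ≤ s * t := (Nat.lt_mul_div_succ x hs).le
  have hts : s * t ≤ x + s := by
    simpa only [t, mul_add, mul_one] using Nat.add_le_add_right (Nat.mul_div_le x s) s
  have htj : t + 1 ≤ 2 ^ j := by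
    refine Nat.le_of_mul_le_mul_left ?_ hs
    linarith
  obtain ⟨v, hv⟩ := Nat.exists_eq_add_of_le htj
  have hyv : y ≤ s * v := by
    rw [hv] at hj
    linarith
  obtain ⟨A, B, hA, hB, hAB⟩ :=
    exists_mul_add_one_eq_pow_two_pow (Nat.one_lt_pow hs.ne' hm) (show t + v + 1 = 2 ^ j by lia)
  rw [← pow_mul] at hA hB hAB
  refine ⟨A, B, ha.trans (le_trans ?_ hA), hb.trans (le_trans ?_ hB), by rw [hAB, mul_comm]⟩
  · exact Nat.pow_le_pow_right hm.le hxt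
  · exact Nat.pow_le_pow_right hm.le hyv

theorem exists_two_pow_mul_between {N : ℕ} (hN : 0 < N) :
    ∃ j s, 0 < s ∧ N + 2 * s ≤ 2 ^ j * s ∧ 2 ^ j * s ≤ N + 10 * N.sqrt := by
  have hr : 0 < N.sqrt := Nat.sqrt_pos.mpr hN
  have hNr : N < (N.sqrt + 1) * (N.sqrt + 1) := Nat.lt_succ_sqrt N
  set r := N.sqrt
  have hlow : r < 2 ^ (Nat.log 2 r + 1) := Nat.lt_pow_succ_log_self one_lt_two r
  have hupp : 2 ^ Nat.log 2 r ≤ r := Nat.pow_log_le_self 2 hr.ne'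
  obtain ⟨K, hK⟩ : ∃ K, 2 ^ (Nat.log 2 r + 2) = K + 2 := Nat.exists_eq_add_of_le' (by grind)
  have hrK : r ≤ K := by grind
  have hKr : K + 2 ≤ 4 * r := by grind
  have hdiv : N / K ≤ r + 2 := by
    refine Nat.lt_succ_iff.mp ((Nat.div_lt_iff_lt_mul (hr.trans_le hrK)).mpr ?_)
    nlinarith
  refine ⟨Nat.log 2 r + 2, N / K + 1, Nat.succ_pos _, ?_, ?_⟩ <;> rw [hK]
  · linarith [Nat.lt_mul_div_succ N (hr.trans_le hrK)]
  · linarith [Nat.mul_div_le N K]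

theorem clog_le_logb_add_one {m a : ℕ} (hm : 1 < m) (ha : 0 < a) :
    (Nat.clog m a : ℝ) ≤ logb m a + 1 := by
  rw [← natCeil_logb_natCast]
  exact (Nat.ceil_lt_add_one (logb_nonneg (by exact_mod_cast hm) (by exact_mod_cast ha))).le

theorem clog_add_clog_le_logb_mul_add_two {m a b : ℕ} (hm : 1 < m) (ha : 0 < a) (hb : 0 < b) :
    (Nat.clog m a + Nat.clog m b : ℝ) ≤ logb m (a * b) + 2 := by
  rw [logb_mul (by positivity) (by positivity)]
  linarith [clog_le_logb_add_one hm ha, clog_le_logb_add_one hm hb]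

theorem two_thirds_le_log {x : ℝ} (hx : 2 ≤ x) : 2 / 3 ≤ log x := by
  linarith [log_le_log two_pos hx, log_two_gt_d9]

theorem logb_le_three_halves_mul_log {m x : ℝ} (hm : 2 ≤ m) (hx : 1 ≤ x) :
    logb m x ≤ 3 / 2 * log x := by
  have hlog : 2 / 3 ≤ log m := two_thirds_le_log hm
  rw [← log_div_log, div_le_iff₀ (by linarith)]
  nlinarith [log_nonneg hx]

theorem add_ten_mul_sqrt_le_logb_add {m x : ℝ} {N : ℕ} (hm : 2 ≤ m) (hx : 2 ≤ x)
    (hN : (N : ℝ) ≤ logb m x + 2) :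
    (N + 10 * N.sqrt : ℝ) ≤ logb m x + 33 * √(log x) := by
  have hlogx : 2 / 3 ≤ log x := two_thirds_le_log hx
  have htwo : 2 ≤ 3 * √(log x) := by
    linarith [le_sqrt_of_sq_le (show (2 / 3) ^ 2 ≤ log x by linarith)]
  have hN_log : (N : ℝ) ≤ 3 ^ 2 * log x := by
    linarith [logb_le_three_halves_mul_log hm (one_le_two.trans hx)]
  have hsqrt : (N.sqrt : ℝ) ≤ 3 * √(log x) := calc
    (N.sqrt : ℝ) ≤ √N := nat_sqrt_le_real_sqrt
    _ ≤ √(3 ^ 2 * log x) := sqrt_le_sqrt hN_log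
    _ = 3 * √(log x) := by rw [sqrt_mul (by positivity), sqrt_sq (by positivity)]
  linarith

theorem pow_le_mul_exp_of_le_logb_add {m x δ : ℝ} {k : ℕ} (hm : 1 < m) (hx : 0 < x)
    (hk : k ≤ logb m x + δ) : m ^ k ≤ x * exp (log m * δ) := calc
  m ^ k = m ^ (k : ℝ) := (rpow_natCast m k).symm
  _ ≤ m ^ (logb m x + δ) := rpow_le_rpow_of_exponent_le hm.le hk
  _ = x * exp (log m * δ) := by
    have hm0 : 0 < m := one_pos.trans hm
    rw [rpow_add hm0, rpow_logb hm0 hm.ne' hx, rpow_def_of_pos hm0 δ]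

theorem clog_add_clog_pos {m a b : ℕ} (hm : 1 < m) (hab : 1 < a * b) :
    0 < Nat.clog m a + Nat.clog m b := by
  have hone_lt : 1 < a ∨ 1 < b := by
    by_contra! hle
    exact hab.not_ge (Nat.mul_le_mul hle.1 hle.2)
  rcases hone_lt with ha | hb
  · exact Nat.add_pos_left (Nat.clog_pos hm ha) _
  · exact Nat.add_pos_right _ (Nat.clog_pos hm hb)

theorem exists_ge_mul_add_one_eq_pow_le_logb_add {m a b : ℕ} (hm : 1 < m) (hab : 1 < a * b) :
    ∃ A B k : ℕ, a ≤ A ∧ b ≤ B ∧ 0 < k ∧ A * B + 1 = m ^ k ∧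
      (k : ℝ) ≤ logb m (a * b) + 33 * √(log (a * b)) := by
  have ha : 0 < a := Nat.pos_of_mul_pos_right (Nat.zero_lt_of_lt hab)
  have hb : 0 < b := Nat.pos_of_mul_pos_left (Nat.zero_lt_of_lt hab)
  obtain ⟨j, s, hs, hlow, hupp⟩ := exists_two_pow_mul_between (clog_add_clog_pos hm hab)
  obtain ⟨A, B, hA, hB, hAB⟩ :=
    exists_ge_mul_add_one_eq_pow hm hs (Nat.le_pow_clog hm a) (Nat.le_pow_clog hm b) hlow
  refine ⟨A, B, 2 ^ j * s, hA, hB, by positivity, hAB, ?_⟩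
  set N := Nat.clog m a + Nat.clog m b
  have hN : (N : ℝ) ≤ logb m (a * b) + 2 := by
    exact_mod_cast clog_add_clog_le_logb_mul_add_two hm ha hb
  calc ((2 ^ j * s : ℕ) : ℝ)
    _ ≤ N + 10 * N.sqrt := by exact_mod_cast hupp
    _ ≤ logb m (a * b) + 33 * √(log (a * b)) :=
      add_ten_mul_sqrt_le_logb_add (by exact_mod_cast hm) (by exact_mod_cast hab) hN

theorem exists_pow_two_product_factorization_general {m a b : ℕ} (hm : 1 < m) (ha : 0 < a)
    (hb : 0 < b) (hab_one : a * b = 1 → m = 2) :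
    ∃ A B : ℕ, a ≤ A ∧ b ≤ B ∧ (∃ k : ℕ, 0 < k ∧ A * B + 1 = m ^ k) ∧
      ((A * B : ℕ) : ℝ) ≤ ((a * b : ℕ) : ℝ) * exp (33 * log m * √(log ((a * b : ℕ) : ℝ))) := by
  obtain hab | hab : a * b = 1 ∨ 1 < a * b := by
    have := Nat.mul_pos ha hb
    lia
  · obtain ⟨rfl, rfl⟩ := mul_eq_one.mp hab
    exact ⟨1, 1, le_rfl, le_rfl, ⟨1, one_pos, by simp [hab_one hab]⟩, by simp⟩
  obtain ⟨A, B, k, hA, hB, hk, hAB, hk_le⟩ := exists_ge_mul_add_one_eq_pow_le_logb_add hm hab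
  refine ⟨A, B, hA, hB, ⟨k, hk, hAB⟩, ?_⟩
  push_cast
  calc (A * B : ℝ)
    _ ≤ m ^ k := by exact_mod_cast (Nat.le_succ _).trans_eq hAB
    _ ≤ a * b * exp (log m * (33 * √(log (a * b)))) :=
      pow_le_mul_exp_of_le_logb_add (by exact_mod_cast hm) (by positivity) hk_le
    _ = a * b * exp (33 * log m * √(log (a * b))) := by ring_nf

/-- **Lemma C.4.** There is an absolute constant `C > 0` such that for all positive
integers `a, b` with `n = a·b`, there exist `A ≥ a` and `B ≥ b` such that `A·B + 1` is a
power of two and `A·B ≤ n·exp(C·√(log n))`. -/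
theorem exists_pow_two_product_factorization :
    ∃ C : ℝ, 0 < C ∧
      ∀ a b : ℕ, 0 < a → 0 < b →
        ∃ A B : ℕ, a ≤ A ∧ b ≤ B ∧ (∃ k : ℕ, 0 < k ∧ A * B + 1 = 2 ^ k) ∧
          ((A * B : ℕ) : ℝ) ≤
            ((a * b : ℕ) : ℝ) * Real.exp (C * Real.sqrt (Real.log ((a * b : ℕ) : ℝ))) := by
  exact ⟨33 * log 2, by positivity, fun a b ha hb ↦
    exists_pow_two_product_factorization_general one_lt_two ha hb fun _ ↦ rfl⟩
end
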